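/- arXiv:2508.09723 — 2 statements merged into one kernel-verified Lean document; each statement's English description precedes it below -/
import Mathlib

section
/- Let u, v_1, v_2, v_3 be formal Laurent series in q with integer coefficients, let l, s_1, s_2, s_3 be integers, and suppose that for each k with l ≤ k ≤ l+6 there exist Laurent polynomials p_k^{(1)}, p_k^{(2)}, p_k^{(3)} ∈ ℤ[x, x^{−1}] such that U_7(u·t^k) = v_1·p_k^{(1)}(t) + v_2·p_k^{(2)}(t) + v_3·p_k^{(3)}(t) and the lowest exponent occurring in p_k^{(i)} is at least ⌈(k + s_i)/7⌉ for i = 1, 2, 3. Then for every integer k there exist Laurent polynomials p_k^{(1)}, p_k^{(2)}, p_k^{(3)} ∈ ℤ[x, x^{−1}] with U_7(u·t^k) = v_1·p_k^{(1)}(t) + v_2·p_k^{(2)}(t) + v_3·p_k^{(3)}(t) and lowest exponent of p_k^{(i)} at least ⌈(k + s_i)/7⌉. -/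
noncomputable section

/-- `J b = ∏_{k=1}^∞ (1 - q^{b·k})` as a formal power series with integer coefficients. -/
def J (b : ℕ) : PowerSeries ℤ :=
  PowerSeries.mk fun n =>
    PowerSeries.coeff n
      (∏ k ∈ Finset.range (n + 1), (1 - (PowerSeries.X : PowerSeries ℤ) ^ (b * (k + 1))))

/-- Evaluation of a Laurent polynomial (given by its finitely supported coefficient
function `p : ℤ →₀ ℤ`) at the invertible Laurent series `T`. -/
def evalT (T : (LaurentSeries ℤ)ˣ) (p : ℤ →₀ ℤ) : LaurentSeries ℤ :=
  p.sum fun n c => c • ((T ^ n : (LaurentSeries ℤ)ˣ) : LaurentSeries ℤ)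

/-!
Write `s` for the series `t(q ^ 7)`. The series `t` is a root of a monic equation of degree seven
over `ℤ[s]`, namely `t ^ 7 = s * ∑ j < 7, B j(s) * t ^ j` with `B 0 = 1`. Since `U_7` pulls power
series in `q ^ 7` out of a product, `V k = U_7 (u * t ^ k)` satisfies the recurrence
`V (k + 7) = t * ∑ j < 7, B j(t) * V (k + j)`. The lattice spanned by the `v_i * t ^ n` with
`7 * n ≥ k + s_i` shrinks as `k` grows and is carried by `t` exactly onto the one for `k + 7`.
Hence membership of `V k` in the lattice of index `k` spreads from seven consecutive indices
upwards by the recurrence and, because `B 0 = 1`, downwards as well.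

For the modular equation, split `J_1` according to exponents modulo `7`. By the pentagonal number
theorem only the classes `0`, `1`, `2`, `5` occur, and the part of class `2` is `-g` with
`g = q ^ 2 * J_49`. Comparing the expansion
`J_1 ^ 3 = ∑ i, (-1) ^ i * (2 * i + 1) * q ^ (i + 1).choose 2` of Jacobi with the cube of this
splitting in the classes `6` and `2` gives `a * b * c = -1` and `a ^ 2 = c + a * b ^ 2` for the
quotients `a`, `b`, `c` of the other three parts by `g`. These two relations force an explicit
polynomial equation of degree seven on `J_1 / g = a + b + c - 1` over `ℤ[z]`, where
`z = -8 - (a ^ 3 * b + b ^ 3 * c + c ^ 3 * a)`. Its constant term is `-z ^ 2`, so the norm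
`∏ ζ, J_1(ζ * q) = J_7 ^ 8 / J_49` over seventh roots of unity `ζ` identifies
`z = q * J_7 ^ 4 / g ^ 4 = 1 / s`. Two Graeffe root-squaring steps pass from `J_1 / g` to its
fourth power `1 / (s * t)`.
-/

open Finset PowerSeries
open scoped Polynomial

section QAnalogues

variable {R S : Type*} [CommRing R] [CommRing S]

/-- The `q`-Pochhammer symbol `(q; q)_n = ∏_{k=1}^n (1 - q^k)`, which at
`q = X ^ b` truncates `J b`. -/
def qPochhammer (q : R) (n : ℕ) : R :=
  ∏ k ∈ range n, (1 - q ^ (k + 1))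

theorem qPochhammer_zero (q : R) : qPochhammer q 0 = 1 :=
  prod_range_zero _

theorem qPochhammer_succ (q : R) (n : ℕ) :
    qPochhammer q (n + 1) = qPochhammer q n * (1 - q ^ (n + 1)) :=
  prod_range_succ _ _

theorem map_qPochhammer {F : Type*} [FunLike F R S] [RingHomClass F R S] (φ : F) (q : R)
    (n : ℕ) :
    φ (qPochhammer q n) = qPochhammer (φ q) n := by
  simp [qPochhammer]

theorem pow_dvd_qPochhammer_sub (q : R) {m n : ℕ} (h : m ≤ n) :
    q ^ (m + 1) ∣ qPochhammer q n - qPochhammer q m := by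
  induction n, h using Nat.le_induction with
  | base => simp
  | succ n hmn ih =>
    have hpow : q ^ (m + 1) ∣ qPochhammer q n * q ^ (n + 1) :=
      (pow_dvd_pow q (by omega)).mul_left _
    convert ih.sub hpow using 1
    rw [qPochhammer_succ]
    ring

/-- The Gaussian binomial coefficient, defined by the `q`-Pascal rule. It vanishes for
`n < j`, where the subtraction `n - j` in the exponent truncates. -/
def qChoose (q : R) : ℕ → ℕ → R
  | _, 0 => 1
  | 0, _ + 1 => 0
  | n + 1, j + 1 => qChoose q n (j + 1) + q ^ (n - j) * qChoose q n j

theorem qChoose_zero_right (q : R) (n : ℕ) : qChoose q n 0 = 1 := by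
  cases n <;> rfl

theorem qChoose_succ_succ (q : R) (n j : ℕ) :
    qChoose q (n + 1) (j + 1) = qChoose q n (j + 1) + q ^ (n - j) * qChoose q n j :=
  rfl

theorem map_qChoose {F : Type*} [FunLike F R S] [RingHomClass F R S] (φ : F) (q : R)
    (n j : ℕ) : φ (qChoose q n j) = qChoose (φ q) n j := by
  induction n generalizing j with
  | zero => cases j <;> simp [qChoose]
  | succ n ih => cases j <;> simp [qChoose, ih]

theorem qChoose_eq_zero_of_lt (q : R) {n j : ℕ} (h : n < j) : qChoose q n j = 0 := by
  induction n generalizing j with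
  | zero =>
    obtain ⟨j, rfl⟩ := Nat.exists_eq_succ_of_ne_zero h.ne'
    rfl
  | succ n ih =>
    obtain ⟨j, rfl⟩ := Nat.exists_eq_succ_of_ne_zero (Nat.ne_zero_of_lt h)
    rw [Nat.succ_eq_add_one, qChoose_succ_succ, ih (by omega), ih (by omega), mul_zero, add_zero]

theorem qChoose_self (q : R) (n : ℕ) : qChoose q n n = 1 := by
  induction n with
  | zero => rfl
  | succ n ih =>
    rw [qChoose_succ_succ, qChoose_eq_zero_of_lt q n.lt_succ_self, ih, Nat.sub_self]
    ring

theorem qChoose_add_mul_qPochhammer (q : R) (i j : ℕ) :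
    qChoose q (i + j) i * (qPochhammer q i * qPochhammer q j) = qPochhammer q (i + j) := by
  induction i generalizing j with
  | zero => simp [qChoose_zero_right, qPochhammer_zero]
  | succ i ihi =>
    induction j with
    | zero => simp [qChoose_self, qPochhammer_zero]
    | succ j ihj =>
      have hleft := ihi (j + 1)
      have hsub : i + (j + 1) - i = j + 1 := by omega
      rw [show i + 1 + (j + 1) = i + (j + 1) + 1 by ring, qChoose_succ_succ, hsub]
      rw [show i + 1 + j = i + (j + 1) by ring] at ihj
      simp only [qPochhammer_succ] at hleft ihj ⊢
      linear_combination (1 - q ^ (j + 1)) * ihj + q ^ (j + 1) * (1 - q ^ (i + 1)) * hleft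

theorem choose_two_succ (n : ℕ) : (n + 1).choose 2 = n + n.choose 2 := by
  rw [Nat.choose_succ_succ' n 1, Nat.choose_one_right]

theorem two_mul_choose_two_add (n : ℕ) : 2 * n.choose 2 + n = n * n := by
  induction n with
  | zero => rfl
  | succ n ih =>
    rw [choose_two_succ]
    linarith

/-- The coefficient of `x ^ (N - j)` in the expansion of `∏ k < N, (x - q ^ k)`. -/
def qBinomialCoeff (q : R) (N j : ℕ) : R :=
  (-1) ^ j * q ^ j.choose 2 * qChoose q N j

theorem qBinomialCoeff_succ_succ (q : R) {N j : ℕ} (h : j ≤ N) :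
    qBinomialCoeff q (N + 1) (j + 1) =
      qBinomialCoeff q N (j + 1) - q ^ N * qBinomialCoeff q N j := by
  have hpow : q ^ N = q ^ j * q ^ (N - j) := by rw [← pow_add, Nat.add_sub_cancel' h]
  simp only [qBinomialCoeff, qChoose_succ_succ, choose_two_succ, hpow]
  ring

theorem prod_sub_pow_eq_sum_qBinomialCoeff (q x : R) (N : ℕ) :
    ∏ k ∈ range N, (x - q ^ k) =
      ∑ j ∈ range (N + 1), qBinomialCoeff q N j * x ^ (N - j) := by
  have hzero (M : ℕ) : qBinomialCoeff q M 0 = 1 := by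
    simp [qBinomialCoeff, qChoose_zero_right]
  induction N with
  | zero => simp [hzero]
  | succ N ih =>
    have htop : qBinomialCoeff q N (N + 1) = 0 := by
      rw [qBinomialCoeff, qChoose_eq_zero_of_lt q N.lt_succ_self, mul_zero]
    have hshift : x * ∑ j ∈ range (N + 1), qBinomialCoeff q N j * x ^ (N - j) =
        ∑ j ∈ range (N + 1), qBinomialCoeff q N (j + 1) * x ^ (N - j) + x ^ (N + 1) := by
      rw [sum_range_succ', sum_range_succ, htop, hzero, mul_add, mul_sum, pow_succ']
      congr 1
      · rw [zero_mul, add_zero]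
        refine sum_congr rfl fun j hj => ?_
        rw [show N - j = N - (j + 1) + 1 by grind]
        ring
      · simp
    have hterm : ∀ j ∈ range (N + 1),
        qBinomialCoeff q (N + 1) (j + 1) * x ^ (N + 1 - (j + 1)) =
          qBinomialCoeff q N (j + 1) * x ^ (N - j) -
            q ^ N * (qBinomialCoeff q N j * x ^ (N - j)) := fun j hj => by
      rw [qBinomialCoeff_succ_succ q (mem_range_succ_iff.1 hj), Nat.add_sub_add_right]
      ring
    rw [prod_range_succ, ih, sum_range_succ' _ (N + 1), sum_congr rfl hterm, sum_sub_distrib,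
      ← mul_sum, hzero, one_mul, Nat.sub_zero]
    linear_combination hshift

theorem prod_pow_mul_sub_pow_lt (q z : R) (n : ℕ) :
    ∏ k ∈ range n, (q ^ n * z - q ^ k) =
      (-1) ^ n * q ^ n.choose 2 * ∏ k ∈ range n, (1 - q ^ (k + 1) * z) := by
  have hfactor : ∀ k ∈ range n,
      q ^ n * z - q ^ k = -1 * q ^ k * (1 - q ^ (n - 1 - k + 1) * z) := fun k hk => by
    have hn : n = k + (n - 1 - k + 1) := by grind
    nth_rw 1 [hn, pow_add]
    ring
  rw [prod_congr rfl hfactor, prod_mul_distrib, prod_mul_distrib, prod_const, card_range,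
    prod_pow_eq_pow_sum, sum_range_id, ← Nat.choose_two_right,
    prod_range_reflect (fun k => 1 - q ^ (k + 1) * z)]

theorem prod_pow_mul_sub_pow_gt (q z : R) (n : ℕ) :
    ∏ k ∈ range n, (q ^ n * z - q ^ (n + 1 + k)) =
      q ^ (n * n) * ∏ k ∈ range n, (z - q ^ (k + 1)) := by
  have hfactor (k : ℕ) : q ^ n * z - q ^ (n + 1 + k) = q ^ n * (z - q ^ (k + 1)) := by ring
  simp only [hfactor, prod_mul_distrib, prod_const, card_range, pow_mul]

theorem prod_pow_mul_sub_pow (q z : R) (n : ℕ) :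
    ∏ k ∈ range (2 * n + 1), (q ^ n * z - q ^ k) =
      (-1) ^ n * q ^ (n + n.choose 2 + n * n) *
        ((z - 1) * ∏ k ∈ range n, (1 - q ^ (k + 1) * z) * (z - q ^ (k + 1))) := by
  rw [show 2 * n + 1 = n + 1 + n by ring, prod_range_add, prod_range_succ,
    prod_pow_mul_sub_pow_lt, prod_pow_mul_sub_pow_gt, prod_mul_distrib]
  ring

theorem qChoose_symm_of_eq_add [IsDomain R] {q : R} (hq : ∀ n, qPochhammer q n ≠ 0) {n i j : ℕ}
    (h : n = i + j) : qChoose q n i = qChoose q n j := by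
  subst h
  apply mul_right_cancel₀ (mul_ne_zero (hq i) (hq j))
  rw [qChoose_add_mul_qPochhammer, mul_comm (qPochhammer q i), add_comm i j,
    qChoose_add_mul_qPochhammer]

theorem qBinomialCoeff_mul_pow_sub (q z : R) {n i : ℕ} (h : i ≤ n) :
    qBinomialCoeff q (2 * n + 1) (n - i) * (q ^ n * z) ^ (n + 1 + i) =
      (-1) ^ n * q ^ (n + n.choose 2 + n * n) *
        ((-1) ^ i * q ^ (i + 1).choose 2 * qChoose q (2 * n + 1) (n - i) * z ^ (n + 1 + i)) := by
  obtain ⟨d, rfl⟩ := Nat.exists_eq_add_of_le h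
  have hexp : d.choose 2 + (i + d) * (i + d + 1 + i) =
      i + d + (i + d).choose 2 + (i + d) * (i + d) + (i + 1).choose 2 := by
    linarith [two_mul_choose_two_add d, two_mul_choose_two_add (i + d),
      two_mul_choose_two_add (i + 1)]
  have hsign : (-1 : R) ^ (i + d) * (-1) ^ i = (-1) ^ d := by
    rw [← pow_add, show i + d + i = d + 2 * i by ring, pow_add, (even_two_mul i).neg_one_pow,
      mul_one]
  rw [qBinomialCoeff, Nat.add_sub_cancel_left, mul_pow, ← pow_mul, ← hsign]
  have hpow := congrArg (q ^ ·) hexp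
  simp only [pow_add _ _ ((i + 1).choose 2), pow_add _ (d.choose 2)] at hpow
  linear_combination (-1) ^ (i + d) * (-1) ^ i * qChoose q (2 * (i + d) + 1) d *
    z ^ (i + d + 1 + i) * hpow

theorem qBinomialCoeff_mul_pow_add [IsDomain R] {q : R} (hq : ∀ n, qPochhammer q n ≠ 0) (z : R)
    {n i : ℕ} (h : i ≤ n) :
    qBinomialCoeff q (2 * n + 1) (n + 1 + i) * (q ^ n * z) ^ (n - i) =
      -((-1) ^ n * q ^ (n + n.choose 2 + n * n) *
        ((-1) ^ i * q ^ (i + 1).choose 2 * qChoose q (2 * n + 1) (n - i) * z ^ (n - i))) := by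
  rw [qChoose_symm_of_eq_add hq (show 2 * n + 1 = n - i + (n + 1 + i) by omega)]
  obtain ⟨d, rfl⟩ := Nat.exists_eq_add_of_le h
  have hexp : (i + d + 1 + i).choose 2 + (i + d) * d =
      i + d + (i + d).choose 2 + (i + d) * (i + d) + (i + 1).choose 2 := by
    linarith [two_mul_choose_two_add (i + d + 1 + i), two_mul_choose_two_add (i + d),
      two_mul_choose_two_add (i + 1)]
  have hsign : (-1 : R) ^ (i + d + 1 + i) = -((-1) ^ (i + d) * (-1) ^ i) := by ring
  rw [qBinomialCoeff, Nat.add_sub_cancel_left, mul_pow, ← pow_mul, hsign]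
  have hpow := congrArg (q ^ ·) hexp
  simp only [pow_add _ _ ((i + 1).choose 2), pow_add _ ((i + d + 1 + i).choose 2)] at hpow
  linear_combination -((-1) ^ (i + d) * (-1) ^ i * qChoose q (2 * (i + d) + 1) (i + d + 1 + i) *
    z ^ d) * hpow

/-- The terms of index `n - i` and `n + 1 + i` of the `q`-binomial expansion have opposite
coefficients, which is where the factor `z - 1` comes from. -/
theorem prod_pow_mul_sub_pow_eq_sum [IsDomain R] {q : R} (hq : ∀ n, qPochhammer q n ≠ 0) (z : R)
    (n : ℕ) :
    ∏ k ∈ range (2 * n + 1), (q ^ n * z - q ^ k) =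
      (-1) ^ n * q ^ (n + n.choose 2 + n * n) *
        ((z - 1) * ∑ i ∈ range (n + 1), (-1) ^ i * q ^ (i + 1).choose 2 *
          qChoose q (2 * n + 1) (n - i) * (z ^ (n - i) * ∑ m ∈ range (2 * i + 1), z ^ m)) := by
  rw [prod_sub_pow_eq_sum_qBinomialCoeff, show 2 * n + 1 + 1 = n + 1 + (n + 1) by ring,
    sum_range_add, ← sum_range_reflect, ← sum_add_distrib, mul_sum, mul_sum]
  refine sum_congr rfl fun i hi => ?_
  have hi : i ≤ n := mem_range_succ_iff.1 hi
  have hgeom : z ^ (n + 1 + i) - z ^ (n - i) =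
      (z - 1) * (z ^ (n - i) * ∑ m ∈ range (2 * i + 1), z ^ m) := by
    rw [show n + 1 + i = n - i + (2 * i + 1) by omega, pow_add]
    linear_combination -z ^ (n - i) * mul_geom_sum z (2 * i + 1)
  rw [show n + 1 - 1 - i = n - i by omega, show 2 * n + 1 - (n - i) = n + 1 + i by omega,
    show 2 * n + 1 - (n + 1 + i) = n - i by omega, qBinomialCoeff_mul_pow_sub q z hi,
    qBinomialCoeff_mul_pow_add hq z hi]
  linear_combination (-1) ^ n * q ^ (n + n.choose 2 + n * n) *
    ((-1) ^ i * q ^ (i + 1).choose 2 * qChoose q (2 * n + 1) (n - i)) * hgeom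

theorem finite_jacobi_triple_product [IsDomain R] {q : R} (hq₀ : q ≠ 0)
    (hq : ∀ n, qPochhammer q n ≠ 0) {z : R} (hz : z ≠ 1) (n : ℕ) :
    ∑ i ∈ range (n + 1), (-1) ^ i * q ^ (i + 1).choose 2 * qChoose q (2 * n + 1) (n - i) *
        (z ^ (n - i) * ∑ m ∈ range (2 * i + 1), z ^ m) =
      ∏ k ∈ range n, (1 - q ^ (k + 1) * z) * (z - q ^ (k + 1)) := by
  have h := (prod_pow_mul_sub_pow_eq_sum hq z n).symm.trans (prod_pow_mul_sub_pow q z n)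
  have hfactor : (-1 : R) ^ n * q ^ (n + n.choose 2 + n * n) ≠ 0 :=
    mul_ne_zero (pow_ne_zero _ (neg_ne_zero.2 one_ne_zero)) (pow_ne_zero _ hq₀)
  exact mul_left_cancel₀ (sub_ne_zero.2 hz) (mul_left_cancel₀ hfactor h)

theorem sum_odd_mul_qChoose_eq_qPochhammer_sq [IsDomain R] {q : R} (hq₀ : q ≠ 0)
    (hq : ∀ n, qPochhammer q n ≠ 0) (n : ℕ) :
    ∑ i ∈ range (n + 1), (-1) ^ i * (2 * (i : R) + 1) * q ^ (i + 1).choose 2 *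
        qChoose q (2 * n + 1) (n - i) = qPochhammer q n ^ 2 := by
  have hqC : ∀ n, qPochhammer (Polynomial.C q) n ≠ 0 := fun n => by
    rw [← map_qPochhammer]
    exact Polynomial.C_ne_zero.2 (hq n)
  have h := congrArg (Polynomial.evalRingHom (1 : R))
    (finite_jacobi_triple_product (Polynomial.C_ne_zero.2 hq₀) hqC
      (by simpa using Polynomial.X_ne_C (1 : R)) n)
  simp only [map_sum, map_prod, map_mul, map_pow, map_sub, map_neg, map_one, map_qChoose,
    Polynomial.coe_evalRingHom, Polynomial.eval_C, Polynomial.eval_X, one_pow, mul_one, one_mul,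
    sum_const, card_range, nsmul_eq_mul] at h
  rw [sq, qPochhammer, ← prod_mul_distrib, ← h]
  refine sum_congr rfl fun i _ => ?_
  push_cast
  ring

theorem pow_dvd_qChoose_mul_qPochhammer_sub_one {q : R} (hq : ∀ n, IsUnit (qPochhammer q n))
    {n i : ℕ} (h : i ≤ n) :
    q ^ (n - i + 1) ∣ qChoose q (2 * n + 1) (n - i) * qPochhammer q n - 1 := by
  have hmul := qChoose_add_mul_qPochhammer q (n - i) (n + 1 + i)
  rw [show n - i + (n + 1 + i) = 2 * n + 1 by omega] at hmul
  have hdvd (m : ℕ) (hm : n - i ≤ m) := pow_dvd_qPochhammer_sub q hm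
  have hcross : q ^ (n - i + 1) ∣ qPochhammer q (2 * n + 1) *
      (qChoose q (2 * n + 1) (n - i) * qPochhammer q n - 1) := by
    obtain ⟨a, ha⟩ := hdvd (n + 1 + i) (by omega)
    obtain ⟨b, hb⟩ := hdvd (2 * n + 1) (by omega)
    obtain ⟨c, hc⟩ := hdvd n (by omega)
    refine ⟨qChoose q (2 * n + 1) (n - i) *
      (b * qPochhammer q n + c * qPochhammer q (n - i) - a * qPochhammer q (n - i)), ?_⟩
    linear_combination hmul + qChoose q (2 * n + 1) (n - i) *
      (hb * qPochhammer q n + hc * qPochhammer q (n - i) - ha * qPochhammer q (n - i))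
  exact (hq _).dvd_mul_left.1 hcross

theorem pow_dvd_sum_odd_sub_qPochhammer_cube [IsDomain R] {q : R} (hq₀ : q ≠ 0)
    (hq : ∀ n, IsUnit (qPochhammer q n)) (n : ℕ) :
    q ^ (n + 1) ∣ qPochhammer q n ^ 3 -
      ∑ i ∈ range (n + 1), (-1) ^ i * (2 * (i : R) + 1) * q ^ (i + 1).choose 2 := by
  rw [pow_succ (qPochhammer q n),
    ← sum_odd_mul_qChoose_eq_qPochhammer_sq hq₀ (fun n => (hq n).ne_zero), sum_mul,
    ← sum_sub_distrib]
  refine dvd_sum fun i hi => ?_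
  have hi : i ≤ n := mem_range_succ_iff.1 hi
  have hchoose : i ≤ (i + 1).choose 2 := by
    rw [choose_two_succ]
    exact Nat.le_add_right _ _
  have hdvd := mul_dvd_mul (pow_dvd_pow q hchoose) (pow_dvd_qChoose_mul_qPochhammer_sub_one hq hi)
  rw [← pow_add, show i + (n - i + 1) = n + 1 by omega] at hdvd
  convert hdvd.mul_left ((-1) ^ i * (2 * (i : R) + 1)) using 1
  ring

end QAnalogues

section EulerFunction

theorem coeff_qPochhammer_X_pow {b : ℕ} (hb : b ≠ 0) {n m : ℕ} (h : n ≤ m) :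
    coeff n (qPochhammer (X ^ b : ℤ⟦X⟧) m) = coeff n (J b) := by
  have htail {m : ℕ} (h : n ≤ m) :
      coeff n (qPochhammer (X ^ b : ℤ⟦X⟧) m) = coeff n (qPochhammer (X ^ b : ℤ⟦X⟧) n) := by
    have hdvd := pow_dvd_qPochhammer_sub (X ^ b : ℤ⟦X⟧) h
    rw [← pow_mul] at hdvd
    have hlt : n < b * (n + 1) := Nat.le_mul_of_pos_left _ (Nat.pos_of_ne_zero hb)
    simpa [sub_eq_zero] using X_pow_dvd_iff.1 hdvd n hlt
  rw [htail h, ← htail n.le_succ]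
  simp only [J, coeff_mk, qPochhammer, pow_mul]

theorem X_pow_dvd_J_one_sub_qPochhammer (n : ℕ) :
    (X : ℤ⟦X⟧) ^ (n + 1) ∣ J 1 - qPochhammer X n := by
  refine X_pow_dvd_iff.2 fun i hi => ?_
  rw [map_sub, ← coeff_qPochhammer_X_pow one_ne_zero (Nat.lt_succ_iff.1 hi), pow_one, sub_self]

theorem constantCoeff_J {b : ℕ} (hb : b ≠ 0) : constantCoeff (J b) = 1 := by
  rw [← coeff_zero_eq_constantCoeff_apply, ← coeff_qPochhammer_X_pow hb le_rfl, qPochhammer_zero,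
    coeff_zero_one]

theorem isUnit_J {b : ℕ} (hb : b ≠ 0) : IsUnit (J b) := by
  rw [isUnit_iff_constantCoeff, constantCoeff_J hb]
  exact isUnit_one

theorem isUnit_qPochhammer_X (n : ℕ) : IsUnit (qPochhammer (X : ℤ⟦X⟧) n) := by
  simp [isUnit_iff_constantCoeff, qPochhammer]

theorem J_eq_expand {b : ℕ} (hb : b ≠ 0) : J b = expand b hb (J 1) := by
  ext n
  rw [← coeff_qPochhammer_X_pow hb le_rfl, ← expand_X b hb, ← map_qPochhammer, coeff_expand,
    coeff_expand]
  split_ifs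
  · simpa using coeff_qPochhammer_X_pow one_ne_zero (Nat.div_le_self n b)
  · rfl

theorem J_one_eq_pentagonalSeries : J 1 = pentagonalSeries ℤ := by
  ext n
  have hrange := Filter.tendsto_finset_range.eventually
    (coeff_prod_one_sub_X_pow_eventually_eq ℤ n)
  obtain ⟨m, hm, hnm⟩ := (hrange.and (Filter.eventually_ge_atTop n)).exists
  rw [← hm, ← coeff_qPochhammer_X_pow one_ne_zero hnm, pow_one, qPochhammer]

theorem X_pow_dvd_J_one_cube_sub_sum (n : ℕ) :
    (X : ℤ⟦X⟧) ^ (n + 1) ∣ J 1 ^ 3 -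
      ∑ i ∈ range (n + 1), (-1) ^ i * (2 * (i : ℤ⟦X⟧) + 1) * X ^ (i + 1).choose 2 := by
  have hcube : (X : ℤ⟦X⟧) ^ (n + 1) ∣ J 1 ^ 3 - qPochhammer X n ^ 3 :=
    (X_pow_dvd_J_one_sub_qPochhammer n).trans (sub_dvd_pow_sub_pow _ _ 3)
  simpa using hcube.add (pow_dvd_sum_odd_sub_qPochhammer_cube X_ne_zero isUnit_qPochhammer_X n)

theorem coeff_J_one_cube (n : ℕ) :
    coeff n (J 1 ^ 3) =
      ∑ i ∈ range (n + 1), if n = (i + 1).choose 2 then (-1) ^ i * (2 * (i : ℤ) + 1) else 0 := by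
  have h := X_pow_dvd_iff.1 (X_pow_dvd_J_one_cube_sub_sum n) n n.lt_succ_self
  rw [map_sub, sub_eq_zero] at h
  rw [h, map_sum]
  refine sum_congr rfl fun i _ => ?_
  have hC : (-1) ^ i * (2 * (i : ℤ⟦X⟧) + 1) = C ((-1) ^ i * (2 * (i : ℤ) + 1)) := by simp
  rw [hC, coeff_C_mul, coeff_X_pow, mul_ite, mul_one, mul_zero]

theorem choose_succ_two_injective : Function.Injective fun i : ℕ => (i + 1).choose 2 := by
  refine StrictMono.injective (strictMono_nat_of_lt_succ fun i => ?_)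
  simp only [choose_two_succ (i + 1)]
  omega

theorem coeff_choose_two_J_one_cube (i : ℕ) :
    coeff ((i + 1).choose 2) (J 1 ^ 3) = (-1) ^ i * (2 * (i : ℤ) + 1) := by
  have hi : i ∈ range ((i + 1).choose 2 + 1) := by
    rw [mem_range_succ_iff, choose_two_succ]
    exact Nat.le_add_right _ _
  simp only [coeff_J_one_cube, choose_succ_two_injective.eq_iff]
  simp [sum_ite_eq, hi]

theorem coeff_J_one_cube_eq_zero {n : ℕ} (h : n ∉ Set.range fun i : ℕ => (i + 1).choose 2) :
    coeff n (J 1 ^ 3) = 0 := by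
  rw [coeff_J_one_cube]
  exact sum_eq_zero fun i _ => if_neg fun hi => h ⟨i, hi.symm⟩

end EulerFunction

section ResiduePart

variable {A : Type*} [CommRing A] {p : ℕ}

/-- The part of a power series supported on the exponents in the residue class `r` modulo `p`. -/
def residuePart (r : ZMod p) (f : A⟦X⟧) : A⟦X⟧ :=
  mk fun n => if (n : ZMod p) = r then coeff n f else 0

theorem coeff_residuePart (r : ZMod p) (f : A⟦X⟧) (n : ℕ) :
    coeff n (residuePart r f) = if (n : ZMod p) = r then coeff n f else 0 :=
  coeff_mk _ _

theorem map_residuePart {B : Type*} [CommRing B] (φ : A →+* B) (r : ZMod p) (f : A⟦X⟧) :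
    map φ (residuePart r f) = residuePart r (map φ f) := by
  ext n
  simp only [coeff_map, coeff_residuePart, apply_ite φ, map_zero]

theorem rescale_residuePart [NeZero p] {w : A} (hw : w ^ p = 1) (r : ZMod p) (f : A⟦X⟧) :
    rescale w (residuePart r f) = C (w ^ r.val) * residuePart r f := by
  ext n
  rw [coeff_rescale, coeff_C_mul, coeff_residuePart]
  split_ifs with h
  · rw [← h, ZMod.val_natCast, ← pow_eq_pow_mod n hw]
  · simp

theorem sum_residuePart [NeZero p] (f : A⟦X⟧) : ∑ r : ZMod p, residuePart r f = f := by
  ext n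
  simp [coeff_residuePart]

theorem residuePart_mul [NeZero p] (r : ZMod p) (f g : A⟦X⟧) :
    residuePart r (f * g) = ∑ s, residuePart s f * residuePart (r - s) g := by
  ext n
  have hterm : ∀ ij ∈ antidiagonal n,
      ∑ s, (if (ij.1 : ZMod p) = s then coeff ij.1 f else 0) *
          (if (ij.2 : ZMod p) = r - s then coeff ij.2 g else 0) =
        if (n : ZMod p) = r then coeff ij.1 f * coeff ij.2 g else 0 := fun ij hij => by
    rw [sum_eq_single (ij.1 : ZMod p) (fun s _ hs => by rw [if_neg hs.symm, zero_mul]) (by simp)]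
    simp [← mem_antidiagonal.1 hij, eq_sub_iff_add_eq, add_comm (ij.2 : ZMod p)]
  simp only [coeff_residuePart, map_sum, coeff_mul]
  rw [sum_comm, sum_congr rfl hterm]
  split_ifs <;> simp

theorem residuePart_pow_three [NeZero p] (r : ZMod p) (f : A⟦X⟧) :
    residuePart r (f ^ 3) =
      ∑ s, ∑ u, residuePart s f * residuePart u f * residuePart (r - s - u) f := by
  simp only [pow_three, residuePart_mul, mul_sum, mul_assoc]

theorem residuePart_eq_zero {ι : Type*} {r : ZMod p} {f : A⟦X⟧} {e : ι → ℕ}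
    (hsupp : ∀ n ∉ Set.range e, coeff n f = 0) (he : ∀ k, (e k : ZMod p) ≠ r) :
    residuePart r f = 0 := by
  ext n
  rw [coeff_residuePart, map_zero, ite_eq_right_iff]
  rintro rfl
  exact hsupp n fun ⟨k, hk⟩ => he k (congrArg _ hk)

/-- Here `g` parametrizes the exponents of `f` in the class `r`, along which `f` reproduces
itself up to the dilation `n ↦ N * n + a` and the factor `c`. -/
theorem residuePart_eq_expand {ι : Type*} {r : ZMod p} {f : A⟦X⟧} {e : ι → ℕ} {g : ι → ι} {c : A}
    {N a : ℕ} (hN : N ≠ 0) (hpN : p ∣ N) (ha : (a : ZMod p) = r)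
    (hsupp : ∀ n ∉ Set.range e, coeff n f = 0)
    (hg : ∀ k, (e k : ZMod p) = r → k ∈ Set.range g)
    (heg : ∀ m, e (g m) = N * e m + a)
    (hcoeff : ∀ m, coeff (e (g m)) f = c * coeff (e m) f) :
    residuePart r f = C c * X ^ a * expand N hN f := by
  have hclass {n : ℕ} (hn : (n : ZMod p) = r) (hf : coeff n f ≠ 0) :
      ∃ m, n = N * e m + a := by
    obtain ⟨k, rfl⟩ := not_imp_comm.1 (hsupp n) hf
    obtain ⟨m, rfl⟩ := hg k hn
    exact ⟨m, heg m⟩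
  have hdilate (k : ℕ) : coeff (N * k + a) f = c * coeff k f := by
    by_cases hk : k ∈ Set.range e
    · obtain ⟨m, rfl⟩ := hk
      rw [← heg, hcoeff]
    · rw [hsupp k hk, mul_zero]
      by_contra hf
      have hr : ((N * k + a : ℕ) : ZMod p) = r := by
        simp [ha, (ZMod.natCast_eq_zero_iff N p).2 hpN]
      obtain ⟨m, hm⟩ := hclass hr hf
      exact hk ⟨m, (Nat.eq_of_mul_eq_mul_left (Nat.pos_of_ne_zero hN)
        (Nat.add_right_cancel hm)).symm⟩
  ext n
  rw [coeff_residuePart, mul_assoc, coeff_C_mul, coeff_X_pow_mul', coeff_expand]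
  by_cases hn : ∃ k, n = N * k + a
  · obtain ⟨k, rfl⟩ := hn
    simp [ha, (ZMod.natCast_eq_zero_iff N p).2 hpN, hdilate, Nat.pos_of_ne_zero hN]
  · have hright : ¬(a ≤ n ∧ N ∣ n - a) := fun ⟨_, k, hk⟩ => hn ⟨k, by omega⟩
    have hleft : (n : ZMod p) = r → coeff n f = 0 := fun hr => by
      by_contra hf
      obtain ⟨m, hm⟩ := hclass hr hf
      exact hn ⟨e m, hm⟩
    grind

theorem sum_zmod_seven {M : Type*} [AddCommMonoid M] (F : ZMod 7 → M) :
    ∑ r, F r = F 0 + F 1 + F 2 + F 3 + F 4 + F 5 + F 6 :=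
  Fin.sum_univ_seven F

theorem sum_mul_mul_two {F : ZMod 7 → A} (h3 : F 3 = 0) (h4 : F 4 = 0) (h6 : F 6 = 0) :
    ∑ s, ∑ u, F s * F u * F (2 - s - u) =
      3 * (F 2 ^ 2 * F 5 + F 0 ^ 2 * F 2 + F 0 * F 1 ^ 2) := by
  simp only [sum_zmod_seven]
  reduce_mod_char
  simp only [h3, h4, h6, mul_zero, zero_mul, add_zero]
  ring

theorem sum_mul_mul_six {F : ZMod 7 → A} (h3 : F 3 = 0) (h4 : F 4 = 0) (h6 : F 6 = 0) :
    ∑ s, ∑ u, F s * F u * F (6 - s - u) = F 2 ^ 3 + 6 * (F 0 * F 1 * F 5) := by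
  simp only [sum_zmod_seven]
  reduce_mod_char
  simp only [h3, h4, h6, mul_zero, zero_mul, add_zero]
  ring

end ResiduePart

section EulerFunctionModSeven

theorem charZero_powerSeries (A : Type*) [Semiring A] [CharZero A] : CharZero A⟦X⟧ :=
  charZero_of_injective_ringHom (C_injective (R := A))

theorem natCast_pentagonal_zmod_seven (k : ℤ) :
    (pentagonal k : ZMod 7) = 4 * ((k : ZMod 7) * (3 * k - 1)) := by
  have h := congrArg (Int.cast : ℤ → ZMod 7) (two_mul_natCast_pentagonal k)
  push_cast at h
  rw [← h, ← mul_assoc, show (4 : ZMod 7) * 2 = 1 from rfl, one_mul]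

theorem natCast_choose_two_zmod_seven (i : ℕ) :
    ((i + 1).choose 2 : ZMod 7) = 4 * ((i : ZMod 7) * (i + 1)) := by
  have h := congrArg (Nat.cast : ℕ → ZMod 7) (two_mul_choose_two_add (i + 1))
  push_cast at h
  have h8 : (8 : ZMod 7) = 1 := rfl
  linear_combination 4 * h - ((i + 1).choose 2 : ZMod 7) * h8

theorem pentagonal_seven_mul_sub_one (m : ℤ) :
    pentagonal (7 * m - 1) = 49 * pentagonal m + 2 := by
  have h : (pentagonal (7 * m - 1) : ℤ) = 49 * pentagonal m + 2 := by
    linarith [two_mul_natCast_pentagonal (7 * m - 1), two_mul_natCast_pentagonal m]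
  exact_mod_cast h

theorem choose_two_seven_mul_add_four (m : ℕ) :
    (7 * m + 3 + 1).choose 2 = 49 * (m + 1).choose 2 + 6 := by
  linarith [two_mul_choose_two_add (7 * m + 3 + 1), two_mul_choose_two_add (m + 1)]

theorem coeff_J_one_eq_zero {n : ℕ} (h : n ∉ Set.range pentagonal) : coeff n (J 1) = 0 := by
  rw [J_one_eq_pentagonalSeries, coeff_pentagonalSeries_eq_zero ℤ h]

/-- The part of `J 1` supported on the exponents congruent to `r` modulo `7`. -/
def eulerPart (r : ZMod 7) : ℤ⟦X⟧ :=
  residuePart r (J 1)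

theorem eulerPart_eq_zero {r : ZMod 7} (hr : r = 3 ∨ r = 4 ∨ r = 6) : eulerPart r = 0 := by
  refine residuePart_eq_zero (fun _ => coeff_J_one_eq_zero) fun k => ?_
  rw [natCast_pentagonal_zmod_seven]
  generalize (k : ZMod 7) = x
  revert r x
  decide

theorem eulerPart_two : eulerPart 2 = -(X ^ 2 * J 49) := by
  have hclass (k : ℤ) (hk : (pentagonal k : ZMod 7) = 2) :
      k ∈ Set.range fun m : ℤ => 7 * m - 1 := by
    have hk1 : (k : ZMod 7) + 1 = 0 := by
      rw [natCast_pentagonal_zmod_seven] at hk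
      generalize (k : ZMod 7) = x at hk ⊢
      revert x
      decide
    obtain ⟨m, hm⟩ := (ZMod.intCast_zmod_eq_zero_iff_dvd (k + 1) 7).1 (by exact_mod_cast hk1)
    exact ⟨m, by simp only; omega⟩
  have hcoeff (m : ℤ) : coeff (pentagonal (7 * m - 1)) (J 1) = -1 * coeff (pentagonal m) (J 1) := by
    rw [J_one_eq_pentagonalSeries, coeff_pentagonalSeries_pentagonal,
      coeff_pentagonalSeries_pentagonal, Int.negOnePow_sub, Int.negOnePow_one,
      show 7 * m = m + 2 * (3 * m) by ring, Int.negOnePow_add, Int.negOnePow_two_mul]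
    simp
  rw [eulerPart, residuePart_eq_expand (by norm_num) (by norm_num : 7 ∣ 49) Nat.cast_ofNat
    (fun _ => coeff_J_one_eq_zero) hclass pentagonal_seven_mul_sub_one hcoeff,
    ← J_eq_expand, map_neg, map_one, neg_mul, neg_mul, one_mul]

theorem residuePart_two_J_one_cube : residuePart (2 : ZMod 7) (J 1 ^ 3) = 0 := by
  refine residuePart_eq_zero (fun _ => coeff_J_one_cube_eq_zero) fun i => ?_
  rw [natCast_choose_two_zmod_seven]
  generalize (i : ZMod 7) = x
  revert x
  decide

theorem residuePart_six_J_one_cube :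
    residuePart (6 : ZMod 7) (J 1 ^ 3) = -7 * (X ^ 2 * J 49) ^ 3 := by
  have hclass (i : ℕ) (hi : ((i + 1).choose 2 : ZMod 7) = 6) :
      i ∈ Set.range fun m : ℕ => 7 * m + 3 := by
    have hi3 : (i : ZMod 7) = (3 : ℕ) := by
      rw [natCast_choose_two_zmod_seven] at hi
      generalize (i : ZMod 7) = x at hi ⊢
      revert x
      decide
    have hmod : i % 7 = 3 := (ZMod.natCast_eq_natCast_iff' i 3 7).1 hi3
    exact ⟨i / 7, by simp only; omega⟩
  have hcoeff (m : ℕ) : coeff ((7 * m + 3 + 1).choose 2) (J 1 ^ 3) =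
      -7 * coeff ((m + 1).choose 2) (J 1 ^ 3) := by
    rw [coeff_choose_two_J_one_cube, coeff_choose_two_J_one_cube,
      show 7 * m + 3 = m + 1 + 2 * (3 * m + 1) by ring, pow_add, (even_two_mul _).neg_one_pow]
    push_cast
    ring
  rw [residuePart_eq_expand (by norm_num) (by norm_num : 7 ∣ 49) Nat.cast_ofNat
    (fun _ => coeff_J_one_cube_eq_zero) hclass choose_two_seven_mul_add_four hcoeff,
    map_pow, ← J_eq_expand]
  simp only [map_neg, map_ofNat]
  ring

theorem J_one_eq_sum_eulerPart :
    J 1 = eulerPart 0 + eulerPart 1 + eulerPart 5 - X ^ 2 * J 49 := by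
  have hsum : ∑ r, eulerPart r = J 1 := sum_residuePart (J 1)
  rw [sum_zmod_seven, eulerPart_two, eulerPart_eq_zero (r := 3) (by decide),
    eulerPart_eq_zero (r := 4) (by decide), eulerPart_eq_zero (r := 6) (by decide)] at hsum
  linear_combination -hsum

theorem residuePart_J_one_cube (r : ZMod 7) :
    residuePart r (J 1 ^ 3) = ∑ s, ∑ u, eulerPart s * eulerPart u * eulerPart (r - s - u) :=
  residuePart_pow_three r (J 1)

theorem eulerPart_zero_mul_one_mul_five :
    eulerPart 0 * eulerPart 1 * eulerPart 5 = -(X ^ 2 * J 49) ^ 3 := by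
  have h := residuePart_J_one_cube 6
  rw [sum_mul_mul_six (eulerPart_eq_zero (by decide)) (eulerPart_eq_zero (by decide))
    (eulerPart_eq_zero (by decide)), residuePart_six_J_one_cube, eulerPart_two] at h
  have := charZero_powerSeries ℤ
  apply mul_left_cancel₀ (OfNat.ofNat_ne_zero 6 : (6 : ℤ⟦X⟧) ≠ 0)
  linear_combination -h

theorem eulerPart_relation :
    (X ^ 2 * J 49) ^ 2 * eulerPart 5 + eulerPart 0 * eulerPart 1 ^ 2 =
      eulerPart 0 ^ 2 * (X ^ 2 * J 49) := by
  have h := residuePart_J_one_cube 2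
  rw [sum_mul_mul_two (eulerPart_eq_zero (by decide)) (eulerPart_eq_zero (by decide))
    (eulerPart_eq_zero (by decide)), residuePart_two_J_one_cube, eulerPart_two] at h
  have := charZero_powerSeries ℤ
  apply mul_left_cancel₀ (OfNat.ofNat_ne_zero 3 : (3 : ℤ⟦X⟧) ≠ 0)
  linear_combination -h

end EulerFunctionModSeven

section CyclicRelations

variable {R : Type*} [CommRing R] {a b c : R}

theorem cyclic_relation (habc : a * b * c = -1) (hrel : a ^ 2 = c + a * b ^ 2) :
    b ^ 2 = a + b * c ^ 2 := by
  linear_combination b * c * hrel + (b ^ 2 - a) * habc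

theorem quadratic_relation (habc : a * b * c = -1) (hrel : a ^ 2 = c + a * b ^ 2) :
    (a * b + b * c + c * a) ^ 2 + (1 + 3 * (a + b + c)) * (a * b + b * c + c * a) =
      (a + b + c) ^ 3 - 2 * (a + b + c) - 3 := by
  have hbc := cyclic_relation habc hrel
  have hca := cyclic_relation (by linear_combination habc) hbc
  linear_combination (2 * (a + b + c) + 3) * habc - a * hrel - b * hbc - c * hca

theorem quartic_relation (habc : a * b * c = -1) (hrel : a ^ 2 = c + a * b ^ 2) :
    a ^ 3 * b + b ^ 3 * c + c ^ 3 * a =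
      (a * b + b * c + c * a) * ((a + b + c) ^ 2 + 5 * (a + b + c) + 1) - 2 * (a + b + c) ^ 3 +
        (a + b + c) ^ 2 + 4 * (a + b + c) + 3 := by
  have hbc := cyclic_relation habc hrel
  have hca := cyclic_relation (by linear_combination habc) hbc
  have hcubic : a ^ 2 * b + b ^ 2 * c + c ^ 2 * a =
      (a + b + c) * (a * b + b * c + c * a) + 3 - (a + b + c) ^ 2 +
        2 * (a * b + b * c + c * a) + (a + b + c) := by
    linear_combination hrel + hbc + hca - 3 * habc
  linear_combination (a + b + c) * hcubic + (a + b + c) * habc - quadratic_relation habc hrel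

/-- The polynomial in `x` satisfied by `x = a + b + c - 1` with
`z = -8 - (a ^ 3 * b + b ^ 3 * c + c ^ 3 * a)`, whenever `a * b * c = -1` and
`a ^ 2 = c + a * b ^ 2`. -/
def septic (z : R) : R[X] :=
  .X ^ 7 + 7 * .X ^ 6 + 21 * .X ^ 5 + 49 * .X ^ 4 + (147 + 7 * .C z) * .X ^ 3 +
    (343 + 35 * .C z) * .X ^ 2 + (343 + 49 * .C z) * .X - .C z ^ 2

theorem eval_septic (z x : R) :
    (septic z).eval x = x ^ 7 + 7 * x ^ 6 + 21 * x ^ 5 + 49 * x ^ 4 + (147 + 7 * z) * x ^ 3 +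
      (343 + 35 * z) * x ^ 2 + (343 + 49 * z) * x - z ^ 2 := by
  simp [septic]

theorem natDegree_septic [Nontrivial R] (z : R) : (septic z).natDegree = 7 := by
  unfold septic
  compute_degree!

theorem monic_septic (z : R) : (septic z).Monic := by
  unfold septic
  monicity!

theorem eval_septic_eq_zero (habc : a * b * c = -1) (hrel : a ^ 2 = c + a * b ^ 2) :
    (septic (-8 - (a ^ 3 * b + b ^ 3 * c + c ^ 3 * a))).eval (a + b + c - 1) = 0 := by
  rw [eval_septic, quartic_relation habc hrel]
  linear_combination -((a + b + c) ^ 2 + 5 * (a + b + c) + 1) ^ 2 * quadratic_relation habc hrel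

end CyclicRelations

section SepticRoots

variable {R : Type*} [CommRing R]

theorem eval_septic_twist_eq_zero {a b c w : R} (habc : a * b * c = -1)
    (hrel : a ^ 2 = c + a * b ^ 2) (hw : w ^ 7 = 1) :
    (septic (-8 - (a ^ 3 * b + b ^ 3 * c + c ^ 3 * a))).eval
      (w ^ 5 * a + w ^ 6 * b + w ^ 3 * c - 1) = 0 := by
  have hw' (e m : ℕ) : w ^ (7 * m + e) = w ^ e := by rw [pow_add, pow_mul, hw, one_pow, one_mul]
  have hquartic : (w ^ 5 * a) ^ 3 * (w ^ 6 * b) + (w ^ 6 * b) ^ 3 * (w ^ 3 * c) +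
      (w ^ 3 * c) ^ 3 * (w ^ 5 * a) = a ^ 3 * b + b ^ 3 * c + c ^ 3 * a := by
    linear_combination a ^ 3 * b * hw' 0 3 + b ^ 3 * c * hw' 0 3 + c ^ 3 * a * hw' 0 2
  rw [← hquartic]
  refine eval_septic_eq_zero ?_ ?_
  · linear_combination habc + a * b * c * hw' 0 2
  · linear_combination w ^ 3 * hrel + a ^ 2 * hw' 3 1 - a * b ^ 2 * hw' 3 2

theorem prod_eq_sq_of_eval_septic_eq_zero [IsDomain R] {ι : Type*} {s : Finset ι} {x : ι → R}
    {z : R} (hs : #s = 7) (hx : Set.InjOn x s) (hroot : ∀ i ∈ s, (septic z).eval (x i) = 0) :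
    ∏ i ∈ s, x i = z ^ 2 := by
  have hnodal : septic z = Lagrange.nodal s x := by
    have hdeg : (septic z).degree = #s := by
      rw [Polynomial.degree_eq_natDegree (monic_septic z).ne_zero, natDegree_septic, hs]
    refine Polynomial.eq_of_degree_le_of_eval_index_eq s hx hdeg.le ?_ ?_ fun i hi => ?_
    · rw [hdeg, Lagrange.degree_nodal]
    · rw [(monic_septic z).leadingCoeff, Lagrange.nodal_monic.leadingCoeff]
    · rw [hroot i hi, Lagrange.eval_nodal_at_node hi]
  have h := congrArg (Polynomial.eval 0) hnodal
  simp only [eval_septic, Lagrange.eval_nodal, zero_sub, prod_neg, hs] at h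
  linear_combination h

end SepticRoots

section Norm

open scoped PowerSeries.WithPiTopology

theorem hasProd_ite_dvd {M : Type*} [CommMonoid M] [TopologicalSpace M] {p : ℕ} (hp : p ≠ 0)
    {f : ℕ → M} {a : M} (h : HasProd (fun j => f (p * (j + 1))) a) :
    HasProd (fun k => if p ∣ k + 1 then f (k + 1) else 1) a := by
  have hpos (j : ℕ) : 0 < p * (j + 1) := Nat.mul_pos (Nat.pos_of_ne_zero hp) j.succ_pos
  have hinj : Function.Injective fun j => p * (j + 1) - 1 := fun i j hij => by
    have hmul : p * (i + 1) = p * (j + 1) := by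
      have := hpos i
      have := hpos j
      simp only at hij
      omega
    exact Nat.succ_injective (Nat.eq_of_mul_eq_mul_left (Nat.pos_of_ne_zero hp) hmul)
  refine (hinj.hasProd_iff fun k hk => if_neg ?_).1 ?_
  · rintro ⟨j, hj⟩
    cases j with
    | zero => omega
    | succ j => exact hk ⟨j, by simp only; omega⟩
  · convert h using 2 with j
    simp [Nat.sub_add_cancel (hpos j)]

theorem prod_one_sub_pow_mul {R : Type*} [CommRing R] [IsDomain R] {ζ : R} {n : ℕ}
    (hζ : IsPrimitiveRoot ζ n) (hn : n ≠ 0) (y : R) :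
    ∏ i ∈ range n, (1 - ζ ^ i * y) = 1 - y ^ n := by
  classical
  have hroots : Polynomial.nthRootsFinset n (1 : R) = (range n).image (ζ ^ ·) := by
    ext x
    have := NeZero.mk hn
    simp only [Polynomial.mem_nthRootsFinset (Nat.pos_of_ne_zero hn), mem_image, mem_range]
    refine ⟨hζ.eq_pow_of_pow_eq_one, ?_⟩
    rintro ⟨i, -, rfl⟩
    rw [← pow_mul, mul_comm, pow_mul, hζ.pow_eq_one, one_pow]
  have h := hζ.pow_sub_pow_eq_prod_sub_mul 1 y (Nat.pos_of_ne_zero hn)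
  rw [hroots, prod_image fun i hi j hj => hζ.pow_inj (mem_range.1 hi) (mem_range.1 hj),
    one_pow] at h
  exact h.symm

variable {A : Type*} [CommRing A]

theorem prod_one_sub_root_mul_pow [IsDomain A] {ζ : A} {p : ℕ} (hζ : IsPrimitiveRoot ζ p)
    (hp : p.Prime) (m : ℕ) :
    (∏ i ∈ range p, (1 - (C (ζ ^ i) * X : A⟦X⟧) ^ m)) *
        (if p ∣ m then 1 - X ^ (p * m) else 1) =
      (1 - X ^ (p * m)) * (if p ∣ m then (1 - X ^ m) ^ p else 1) := by
  have hcomm (i : ℕ) : (C (ζ ^ i) * X : A⟦X⟧) ^ m = C (ζ ^ m) ^ i * X ^ m := by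
    rw [mul_pow, ← map_pow, ← map_pow, ← pow_mul, ← pow_mul, mul_comm i]
  simp only [hcomm]
  split_ifs with hdvd
  · simp [hζ.pow_eq_one_iff_dvd m |>.2 hdvd, mul_comm]
  · have hζm : IsPrimitiveRoot (C (ζ ^ m) : A⟦X⟧) p :=
      (hζ.pow_of_coprime m ((hp.coprime_iff_not_dvd.2 hdvd).symm)).map_of_injective C_injective
    rw [prod_one_sub_pow_mul hζm hp.ne_zero, ← pow_mul, mul_comm m]

variable [TopologicalSpace A]

theorem continuous_of_continuous_coeff {Y : Type*} [TopologicalSpace Y] {φ : Y → A⟦X⟧}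
    (h : ∀ n, Continuous fun y => coeff n (φ y)) : Continuous φ :=
  continuous_iff_continuousAt.2 fun y =>
    (WithPiTopology.tendsto_iff_coeff_tendsto _ _ _ _).2 fun n => (h n).tendsto y

theorem hasProd_J {b : ℕ} (hb : b ≠ 0) :
    HasProd (fun k => (1 - X ^ (b * (k + 1)) : ℤ⟦X⟧)) (J b) := by
  have hcont : Continuous (expand b hb : ℤ⟦X⟧ → ℤ⟦X⟧) :=
    continuous_of_continuous_coeff fun n => by
      simp only [coeff_expand]
      split_ifs
      exacts [WithPiTopology.continuous_coeff ℤ _, continuous_const]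
  rw [J_eq_expand hb, J_one_eq_pentagonalSeries]
  simpa [Function.comp_def, pow_mul] using
    (WithPiTopology.hasProd_one_sub_X_pow ℤ).map (expand b hb) hcont

theorem hasProd_map_J {b : ℕ} (hb : b ≠ 0) :
    HasProd (fun k => (1 - X ^ (b * (k + 1)) : A⟦X⟧)) (map (Int.castRingHom A) (J b)) := by
  have hcont : Continuous (map (Int.castRingHom A)) :=
    continuous_of_continuous_coeff fun n => by
      simp only [coeff_map]
      exact continuous_of_discreteTopology.comp (WithPiTopology.continuous_coeff ℤ n)
  simpa [Function.comp_def] using (hasProd_J hb).map (map (Int.castRingHom A)) hcont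

theorem hasProd_rescale_map_J_one [ContinuousMul A] (w : A) :
    HasProd (fun k => (1 - (C w * X) ^ (k + 1) : A⟦X⟧))
      (rescale w (map (Int.castRingHom A) (J 1))) := by
  have hcont : Continuous (rescale w) :=
    continuous_of_continuous_coeff fun n => by
      simp only [coeff_rescale]
      exact (WithPiTopology.continuous_coeff A n).const_mul _
  simpa [Function.comp_def] using (hasProd_map_J one_ne_zero).map (rescale w) hcont

theorem prod_rescale_J_one_mul_J_sq {ζ : ℂ} {p : ℕ} (hζ : IsPrimitiveRoot ζ p) (hp : p.Prime) :
    (∏ i ∈ range p, rescale (ζ ^ i) (map (Int.castRingHom ℂ) (J 1))) *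
        map (Int.castRingHom ℂ) (J (p * p)) =
      map (Int.castRingHom ℂ) (J p) ^ (p + 1) := by
  have hJsq : HasProd (fun k => if p ∣ k + 1 then (1 - X ^ (p * (k + 1)) : ℂ⟦X⟧) else 1)
      (map (Int.castRingHom ℂ) (J (p * p))) := by
    refine hasProd_ite_dvd hp.ne_zero (f := fun m => (1 - X ^ (p * m) : ℂ⟦X⟧)) ?_
    simpa only [← mul_assoc] using hasProd_map_J (mul_ne_zero hp.ne_zero hp.ne_zero)
  have hJpow : HasProd (fun k => if p ∣ k + 1 then (1 - X ^ (k + 1) : ℂ⟦X⟧) ^ p else 1)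
      (map (Int.castRingHom ℂ) (J p) ^ p) :=
    hasProd_ite_dvd hp.ne_zero (f := fun m => (1 - X ^ m : ℂ⟦X⟧) ^ p)
      ((hasProd_map_J hp.ne_zero).pow p)
  have hleft := (hasProd_prod fun i (_ : i ∈ range p) =>
    hasProd_rescale_map_J_one (ζ ^ i)).mul hJsq
  have hright := (hasProd_map_J hp.ne_zero).mul hJpow
  simp only [prod_one_sub_root_mul_pow hζ hp] at hleft
  rw [pow_succ', hleft.unique hright]

end Norm

section EulerQuartic

theorem prod_mul_eq_sq_of_relations_of_field {K : Type*} [Field K] {a b c g ζ : K} (hg : g ≠ 0)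
    (habc : a * b * c = -g ^ 3) (hrel : g ^ 2 * c + a * b ^ 2 = a ^ 2 * g) (hζ : ζ ^ 7 = 1)
    {y : ℕ → K} (hy : ∀ i, y i = a + ζ ^ i * b + (ζ ^ i) ^ 5 * c - (ζ ^ i) ^ 2 * g)
    (hinj : Set.InjOn (fun i => (ζ ^ i) ^ 5 * y i) (range 7)) :
    (∏ i ∈ range 7, y i) * g = (-8 * g ^ 4 - (a ^ 3 * b + b ^ 3 * c + c ^ 3 * a)) ^ 2 := by
  have hroot (i : ℕ) : (ζ ^ i) ^ 7 = 1 := by rw [← pow_mul, mul_comm, pow_mul, hζ, one_pow]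
  have hprod : ∏ i ∈ range 7, (ζ ^ i) ^ 5 = 1 := by
    rw [prod_pow, prod_pow_eq_pow_sum, show ∑ i ∈ range 7, i = 7 * 3 by rfl, pow_mul, hζ, one_pow,
      one_pow]
  have hx (i : ℕ) : (ζ ^ i) ^ 5 * y i / g =
      (ζ ^ i) ^ 5 * (a / g) + (ζ ^ i) ^ 6 * (b / g) + (ζ ^ i) ^ 3 * (c / g) - 1 := by
    rw [hy]
    field_simp
    linear_combination (c * (ζ ^ i) ^ 3 - g) * hroot i
  have hseptic (i : ℕ) : (septic (-8 - ((a / g) ^ 3 * (b / g) + (b / g) ^ 3 * (c / g) +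
      (c / g) ^ 3 * (a / g)))).eval ((ζ ^ i) ^ 5 * y i / g) = 0 := by
    rw [hx]
    refine eval_septic_twist_eq_zero ?_ ?_ (hroot i)
    · field_simp
      exact habc
    · field_simp
      linear_combination -hrel
  have h := prod_eq_sq_of_eval_septic_eq_zero (card_range 7)
    (fun i hi j hj hij => hinj hi hj ((div_left_inj' hg).1 hij)) fun i _ => hseptic i
  rw [prod_div_distrib, prod_mul_distrib, hprod, prod_const, card_range, one_mul,
    div_eq_iff (pow_ne_zero 7 hg)] at h
  rw [h]
  field_simp

theorem prod_mul_eq_sq_of_relations {R : Type*} [CommRing R] [IsDomain R] {a b c g ζ : R}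
    (hg : g ≠ 0) (habc : a * b * c = -g ^ 3) (hrel : g ^ 2 * c + a * b ^ 2 = a ^ 2 * g)
    (hζ : ζ ^ 7 = 1) {y : ℕ → R}
    (hy : ∀ i, y i = a + ζ ^ i * b + (ζ ^ i) ^ 5 * c - (ζ ^ i) ^ 2 * g)
    (hinj : Set.InjOn (fun i => (ζ ^ i) ^ 5 * y i) (range 7)) :
    (∏ i ∈ range 7, y i) * g = (-8 * g ^ 4 - (a ^ 3 * b + b ^ 3 * c + c ^ 3 * a)) ^ 2 := by
  let φ := algebraMap R (FractionRing R)
  have hφ : Function.Injective φ := IsFractionRing.injective R _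
  apply hφ
  have h := prod_mul_eq_sq_of_relations_of_field (ζ := φ ζ) (y := fun i => φ (y i))
    ((map_ne_zero_iff φ hφ).2 hg)
    (by simpa only [map_mul, map_neg, map_pow] using congrArg φ habc)
    (by simpa only [map_add, map_mul, map_pow] using congrArg φ hrel)
    (by rw [← map_pow, hζ, map_one])
    (fun i => by simpa only [map_add, map_sub, map_mul, map_pow] using congrArg φ (hy i))
    (fun i hi j hj hij => hinj hi hj (hφ (by simpa only [map_mul, map_pow] using hij)))
  simpa only [map_add, map_sub, map_mul, map_neg, map_pow, map_prod, map_ofNat] using h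

theorem rescale_map_J_one {w : ℂ} (hw : w ^ 7 = 1) :
    rescale w (map (Int.castRingHom ℂ) (J 1)) =
      map (Int.castRingHom ℂ) (eulerPart 0) + C w * map (Int.castRingHom ℂ) (eulerPart 1) +
        C w ^ 5 * map (Int.castRingHom ℂ) (eulerPart 5) -
          C w ^ 2 * map (Int.castRingHom ℂ) (X ^ 2 * J 49) := by
  have hpart (r : ZMod 7) : rescale w (map (Int.castRingHom ℂ) (eulerPart r)) =
      C w ^ r.val * map (Int.castRingHom ℂ) (eulerPart r) := by
    rw [eulerPart, map_residuePart, rescale_residuePart hw, map_pow]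
  have htwo := hpart 2
  rw [eulerPart_two, map_neg, map_neg, mul_neg, neg_inj] at htwo
  rw [J_one_eq_sum_eulerPart]
  simp only [map_add, map_sub, hpart, htwo]
  simp [show (1 : ZMod 7).val = 1 from rfl, show (2 : ZMod 7).val = 2 from rfl,
    show (5 : ZMod 7).val = 5 from rfl]

/-- With `a`, `b`, `c` the parts of `J 1` of class `0`, `1`, `5` divided by `X ^ 2 * J 49`, this is
the parameter `z = -8 - (a ^ 3 * b + b ^ 3 * c + c ^ 3 * a)` of `septic`, multiplied by
`(X ^ 2 * J 49) ^ 4` to clear denominators. -/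
def eulerQuartic : ℤ⟦X⟧ :=
  -8 * (X ^ 2 * J 49) ^ 4 - (eulerPart 0 ^ 3 * eulerPart 1 + eulerPart 1 ^ 3 * eulerPart 5 +
    eulerPart 5 ^ 3 * eulerPart 0)

theorem injOn_pow_mul_rescale_map_J_one {ζ : ℂ} (hζ : IsPrimitiveRoot ζ 7) :
    Set.InjOn (fun i => (C ζ ^ i) ^ 5 * rescale (ζ ^ i) (map (Int.castRingHom ℂ) (J 1)))
      (range 7) := fun i hi j hj hij => by
  have hconst := congrArg constantCoeff hij
  simp only [map_mul, map_pow, ← coeff_zero_eq_constantCoeff_apply,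
    coeff_rescale, coeff_map] at hconst
  simp only [coeff_zero_eq_constantCoeff_apply, constantCoeff_J one_ne_zero, constantCoeff_C,
    map_one, pow_zero, mul_one, pow_right_comm _ _ 5] at hconst
  exact (hζ.pow_of_coprime 5 (by norm_num)).pow_inj (mem_range.1 hi) (mem_range.1 hj) hconst

theorem eulerQuartic_sq : eulerQuartic ^ 2 = (X * J 7 ^ 4) ^ 2 := by
  have hζ := Complex.isPrimitiveRoot_exp 7 (by norm_num)
  set ζ := Complex.exp (2 * Real.pi * Complex.I / (7 : ℕ))
  let φ : ℤ⟦X⟧ →+* ℂ⟦X⟧ := map (Int.castRingHom ℂ)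
  have hφ : Function.Injective φ := map_injective (Int.castRingHom ℂ) Int.cast_injective
  have hg : φ (X ^ 2 * J 49) ≠ 0 := (map_ne_zero_iff φ hφ).2
    (mul_ne_zero (pow_ne_zero 2 X_ne_zero) (isUnit_J (by norm_num)).ne_zero)
  have hroot (i : ℕ) : (ζ ^ i) ^ 7 = 1 := by
    rw [← pow_mul, mul_comm, pow_mul, hζ.pow_eq_one, one_pow]
  have hsq : (∏ i ∈ range 7, rescale (ζ ^ i) (φ (J 1))) * φ (X ^ 2 * J 49) =
      φ eulerQuartic ^ 2 := by
    rw [prod_mul_eq_sq_of_relations (ζ := C ζ) hg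
      (by simpa only [map_mul, map_neg, map_pow] using congrArg φ eulerPart_zero_mul_one_mul_five)
      (by simpa only [map_add, map_mul, map_pow] using congrArg φ eulerPart_relation)
      (by rw [← map_pow, hζ.pow_eq_one, map_one])
      (fun i => by simpa only [map_pow] using rescale_map_J_one (hroot i))
      (injOn_pow_mul_rescale_map_J_one hζ)]
    simp only [eulerQuartic, map_sub, map_add, map_mul, map_pow, map_neg, map_ofNat]
  have hnorm : (∏ i ∈ range 7, rescale (ζ ^ i) (φ (J 1))) * φ (J 49) = φ (J 7) ^ 8 :=
    prod_rescale_J_one_mul_J_sq hζ (by norm_num)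
  apply hφ
  rw [map_pow, ← hsq]
  simp only [map_mul, map_pow]
  linear_combination φ X ^ 2 * hnorm

theorem coeff_one_J_one : coeff 1 (J 1) = -1 := by
  rw [← coeff_qPochhammer_X_pow one_ne_zero le_rfl, qPochhammer_succ, qPochhammer_zero]
  simp

theorem coeff_one_eulerQuartic : coeff 1 eulerQuartic = 1 := by
  have hconst (r : ZMod 7) : constantCoeff (eulerPart r) = if 0 = r then 1 else 0 := by
    rw [← coeff_zero_eq_constantCoeff_apply, eulerPart, coeff_residuePart,
      coeff_zero_eq_constantCoeff_apply, constantCoeff_J one_ne_zero, Nat.cast_zero]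
  have hconst₀ : constantCoeff (eulerPart 0) = 1 := hconst 0
  have hconst₁ : constantCoeff (eulerPart 1) = 0 := hconst 1
  have hconst₅ : constantCoeff (eulerPart 5) = 0 := hconst 5
  have hcoeff : coeff 1 (eulerPart 1) = -1 := by
    rw [eulerPart, coeff_residuePart, if_pos Nat.cast_one, coeff_one_J_one]
  simp [eulerQuartic, coeff_one_mul, coeff_one_pow, hconst₀, hconst₁, hconst₅, hcoeff]

theorem eulerQuartic_eq : eulerQuartic = X * J 7 ^ 4 := by
  rcases sq_eq_sq_iff_eq_or_eq_neg.1 eulerQuartic_sq with h | h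
  · exact h
  · have hcoeff := congrArg (coeff 1) h
    rw [coeff_one_eulerQuartic, map_neg, coeff_one_mul, map_pow, constantCoeff_J (by norm_num)]
      at hcoeff
    simp at hcoeff

end EulerQuartic

section ModularEquation

theorem graeffe_septic {R : Type*} [CommRing R] {x z : R} (h : (septic z).eval x = 0) :
    x ^ 4 * ((x ^ 4) ^ 3 + (49 + 14 * z) * (x ^ 4) ^ 2 + (2401 + 686 * z + 63 * z ^ 2) * x ^ 4 +
        (117649 + 33614 * z + 3087 * z ^ 2 + 70 * z ^ 3)) ^ 2 =
      (7 * (x ^ 4) ^ 3 + (343 + 98 * z) * (x ^ 4) ^ 2 + (16807 + 4802 * z + 441 * z ^ 2) * x ^ 4 +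
        z ^ 4) ^ 2 := by
  rw [eval_septic] at h
  have hsq {A B y : R} (hAB : A + y * B = 0) : y ^ 2 * B ^ 2 = A ^ 2 := by
    linear_combination (y * B - A) * hAB
  have h₁ := hsq (y := x) (A := 7 * (x ^ 2) ^ 3 + 49 * (x ^ 2) ^ 2 + (343 + 35 * z) * x ^ 2 - z ^ 2)
    (B := (x ^ 2) ^ 3 + 21 * (x ^ 2) ^ 2 + (147 + 7 * z) * x ^ 2 + (343 + 49 * z))
    (by linear_combination h)
  have h₂ := hsq (y := x ^ 2)
    (A := -(7 * (x ^ 4) ^ 3 + (343 + 98 * z) * (x ^ 4) ^ 2 +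
      (16807 + 4802 * z + 441 * z ^ 2) * x ^ 4 + z ^ 4))
    (B := (x ^ 4) ^ 3 + (49 + 14 * z) * (x ^ 4) ^ 2 + (2401 + 686 * z + 63 * z ^ 2) * x ^ 4 +
      (117649 + 33614 * z + 3087 * z ^ 2 + 70 * z ^ 3))
    (by linear_combination h₁)
  linear_combination h₂

theorem map_eval₂_intCastRingHom {A B : Type*} [CommRing A] [CommRing B] (f : A →+* B) (p : ℤ[X])
    (x : A) : f (p.eval₂ (Int.castRingHom A) x) = p.eval₂ (Int.castRingHom B) (f x) := by
  rw [Polynomial.hom_eval₂, RingHom.eq_intCast' (f.comp _)]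

/-- The coefficients, as polynomials in `s = t(q ^ 7)`, of the equation
`t ^ 7 = s * ∑ j < 7, modularCoeff j * t ^ j` satisfied by `t = t(q)`. -/
def modularCoeff : ℕ → ℤ[X]
  | 0 => 1
  | 1 => 28 + 49 * .X * modularCoeff 0
  | 2 => 322 + 49 * .X * modularCoeff 1
  | 3 => 1904 + 49 * .X * modularCoeff 2
  | 4 => 5915 + 49 * .X * modularCoeff 3
  | 5 => 8624 + 49 * .X * modularCoeff 4
  | 6 => 4018 + 49 * .X * modularCoeff 5
  | _ => 0

theorem modular_equation_of_septic {K : Type*} [Field K] {x z s t : K} (hs : z * s = 1)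
    (ht : t * s * x ^ 4 = 1) (h : (septic z).eval x = 0) :
    t ^ 7 = s * ∑ j ∈ range 7, (modularCoeff j).eval₂ (Int.castRingHom K) s * t ^ j := by
  have hs₀ : s ≠ 0 := right_ne_zero_of_mul_eq_one hs
  have ht₀ : t ≠ 0 := left_ne_zero_of_mul (left_ne_zero_of_mul_eq_one ht)
  obtain rfl : z = s⁻¹ := eq_inv_of_mul_eq_one_left hs
  have hx : x ^ 4 = (t * s)⁻¹ := eq_inv_of_mul_eq_one_right ht
  set e₁ := 49 * s + 14
  set e₂ := 49 * s * e₁ + 63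
  set e₃ := 49 * s * e₂ + 70
  have hgraeffe : t * (t ^ 3 + 7 * s * (1 + e₁ * t + e₂ * t ^ 2)) ^ 2 =
      s * (1 + e₁ * t + e₂ * t ^ 2 + e₃ * t ^ 3) ^ 2 := by
    have := graeffe_septic h
    rw [hx] at this
    field_simp at this
    linear_combination -this
  simp only [sum_range_succ, sum_range_zero, modularCoeff, Polynomial.eval₂_add,
    Polynomial.eval₂_mul, Polynomial.eval₂_X, Polynomial.eval₂_ofNat, Polynomial.eval₂_one]
  linear_combination hgraeffe

theorem modular_equation_of_relations {R : Type*} [CommRing R] [IsDomain R] {a b c g s t : R}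
    (hg : g ≠ 0) (habc : a * b * c = -g ^ 3) (hrel : g ^ 2 * c + a * b ^ 2 = a ^ 2 * g)
    (hs : s * (-8 * g ^ 4 - (a ^ 3 * b + b ^ 3 * c + c ^ 3 * a)) = g ^ 4)
    (ht : t * (a + b + c - g) ^ 4 = -8 * g ^ 4 - (a ^ 3 * b + b ^ 3 * c + c ^ 3 * a)) :
    t ^ 7 = s * ∑ j ∈ range 7, (modularCoeff j).eval₂ (Int.castRingHom R) s * t ^ j := by
  let φ := algebraMap R (FractionRing R)
  have hφ : Function.Injective φ := IsFractionRing.injective R _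
  have hg' : φ g ≠ 0 := (map_ne_zero_iff φ hφ).2 hg
  have habc' := congrArg φ habc
  have hrel' := congrArg φ hrel
  have hs' := congrArg φ hs
  have ht' := congrArg φ ht
  simp only [map_add, map_sub, map_mul, map_neg, map_pow, map_ofNat] at habc' hrel' hs' ht'
  have hseptic := eval_septic_eq_zero (a := φ a / φ g) (b := φ b / φ g) (c := φ c / φ g)
    (by field_simp; exact habc') (by field_simp; linear_combination -hrel')
  apply hφ
  have h := modular_equation_of_septic (s := φ s) (t := φ t)
    (by field_simp; linear_combination hs')
    (by field_simp; linear_combination φ s * ht' + hs') hseptic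
  simpa only [map_pow, map_mul, map_sum, map_eval₂_intCastRingHom] using h

theorem modular_equation {t : ℤ⟦X⟧} (ht : t * J 1 ^ 4 = X * J 7 ^ 4) :
    t ^ 7 = expand 7 (by norm_num) t *
      ∑ j ∈ range 7,
        (modularCoeff j).eval₂ (Int.castRingHom ℤ⟦X⟧) (expand 7 (by norm_num) t) * t ^ j := by
  have hg : (X ^ 2 * J 49 : ℤ⟦X⟧) ≠ 0 :=
    mul_ne_zero (pow_ne_zero 2 X_ne_zero) (isUnit_J (by norm_num)).ne_zero
  have hexpand : expand 7 (by norm_num) (J 7) = J 49 := by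
    rw [J_eq_expand (b := 7) (by norm_num), ← expand_mul, ← J_eq_expand (by norm_num)]
  have hs := congrArg (expand 7 (by norm_num)) ht
  simp only [map_mul, map_pow, expand_X, hexpand, ← J_eq_expand] at hs
  have hs' : expand 7 (by norm_num) t * eulerQuartic = (X ^ 2 * J 49) ^ 4 := by
    rw [eulerQuartic_eq]
    linear_combination X * hs
  have ht' : t * (eulerPart 0 + eulerPart 1 + eulerPart 5 - X ^ 2 * J 49) ^ 4 = eulerQuartic := by
    rw [← J_one_eq_sum_eulerPart, ht, eulerQuartic_eq]
  exact modular_equation_of_relations hg eulerPart_zero_mul_one_mul_five eulerPart_relation hs' ht'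

end ModularEquation

section UOperator

variable {R : Type*} [CommRing R] {m : ℕ} {U : LaurentSeries R → LaurentSeries R}

theorem coeff_ofPowerSeries_expand_mul (hm : m ≠ 0) (f : R⟦X⟧) (n : ℤ) :
    (HahnSeries.ofPowerSeries ℤ R (expand m hm f)).coeff (m * n) =
      (HahnSeries.ofPowerSeries ℤ R f).coeff n := by
  have hpos : (0 : ℤ) < m := by positivity
  rw [coeff_coe, coeff_coe, Int.natAbs_mul, Int.natAbs_natCast, coeff_expand_mul]
  simp only [mul_neg_iff, hpos, hpos.not_gt, true_and, false_and, or_false]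

theorem coeff_ofPowerSeries_expand_of_not_dvd (hm : m ≠ 0) (f : R⟦X⟧) {n : ℤ} (hn : ¬(m : ℤ) ∣ n) :
    (HahnSeries.ofPowerSeries ℤ R (expand m hm f)).coeff n = 0 := by
  rw [coeff_coe, coeff_expand_of_not_dvd _ hm _ (by rwa [← Int.natCast_dvd]), ite_self]

theorem U_add (hU : ∀ f n, (U f).coeff n = f.coeff (m * n)) (f g : LaurentSeries R) :
    U (f + g) = U f + U g := by
  ext n
  simp only [hU, HahnSeries.coeff_add]

theorem U_ofPowerSeries_expand_mul (hm : m ≠ 0) (hU : ∀ f n, (U f).coeff n = f.coeff (m * n))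
    (f : R⟦X⟧) (g : LaurentSeries R) :
    U (HahnSeries.ofPowerSeries ℤ R (expand m hm f) * g) =
      HahnSeries.ofPowerSeries ℤ R f * U g := by
  ext n
  rw [hU, HahnSeries.coeff_mul, HahnSeries.coeff_mul]
  have hm' : (m : ℤ) ≠ 0 := mod_cast hm
  refine (Finset.sum_nbij (fun p : ℤ × ℤ => (m * p.1, m * p.2)) ?_ ?_ ?_ ?_).symm
  · rintro ⟨i, j⟩ hij
    simp only [Finset.mem_antidiagonal, HahnSeries.mem_support] at hij ⊢
    obtain ⟨hi, hj, hsum⟩ := hij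
    exact ⟨by rwa [coeff_ofPowerSeries_expand_mul], by rwa [← hU], by rw [← hsum, mul_add]⟩
  · rintro ⟨i, j⟩ - ⟨i₂, j₂⟩ - hij
    simpa only [Prod.mk.injEq, mul_right_inj' hm'] using hij
  · rintro ⟨i, j⟩ hij
    simp only [mem_coe, Finset.mem_antidiagonal, HahnSeries.mem_support] at hij
    obtain ⟨hi, hj, hsum⟩ := hij
    obtain ⟨i, rfl⟩ : (m : ℤ) ∣ i :=
      not_imp_comm.1 (coeff_ofPowerSeries_expand_of_not_dvd hm f) hi
    obtain ⟨j, rfl⟩ : (m : ℤ) ∣ j := (Int.dvd_add_right ⟨i, rfl⟩).1 ⟨n, hsum⟩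
    rw [← mul_add, mul_right_inj' hm'] at hsum
    rw [coeff_ofPowerSeries_expand_mul] at hi
    rw [← hU] at hj
    exact ⟨(i, j), by simpa using ⟨hi, hj, hsum⟩, rfl⟩
  · rintro ⟨i, j⟩ -
    rw [coeff_ofPowerSeries_expand_mul, hU]

theorem U_mul_zpow_add (hm : m ≠ 0) (hU : ∀ f n, (U f).coeff n = f.coeff (m * n))
    {B : ℕ → ℤ[X]} {t : R⟦X⟧}
    (ht : t ^ m = expand m hm t *
      ∑ j ∈ range m, (B j).eval₂ (Int.castRingHom R⟦X⟧) (expand m hm t) * t ^ j)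
    {T : (LaurentSeries R)ˣ} (hT : HahnSeries.ofPowerSeries ℤ R t = T)
    (u : LaurentSeries R) (k : ℤ) :
    U (u * ↑(T ^ (k + m))) = T * ∑ j ∈ range m,
      (B j).eval₂ (Int.castRingHom (LaurentSeries R)) T * U (u * ↑(T ^ (k + j))) := by
  let U' : LaurentSeries R →+ LaurentSeries R := AddMonoidHom.mk' U (U_add hU)
  have hcoe (p : ℤ[X]) : HahnSeries.ofPowerSeries ℤ R (p.eval₂ (Int.castRingHom R⟦X⟧) t) =
      p.eval₂ (Int.castRingHom (LaurentSeries R)) T := by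
    rw [map_eval₂_intCastRingHom, hT]
  have hexpand (p : ℤ[X]) : expand m hm (p.eval₂ (Int.castRingHom R⟦X⟧) t) =
      p.eval₂ (Int.castRingHom R⟦X⟧) (expand m hm t) :=
    map_eval₂_intCastRingHom (expand m hm).toRingHom p t
  have hmul : u * ↑(T ^ (k + m)) = ∑ j ∈ range m, HahnSeries.ofPowerSeries ℤ R
      (expand m hm (t * (B j).eval₂ (Int.castRingHom R⟦X⟧) t)) * (u * ↑(T ^ (k + j))) := by
    rw [zpow_add, Units.val_mul, zpow_natCast, Units.val_pow_eq_pow_val, ← hT, ← map_pow, ht,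
      map_mul, map_sum, mul_sum, mul_sum, mul_sum]
    refine sum_congr rfl fun j _ => ?_
    simp only [hexpand, zpow_add, zpow_natCast, Units.val_mul, Units.val_pow_eq_pow_val, map_mul,
      map_pow, hT]
    ring
  rw [hmul]
  change U' _ = _
  rw [map_sum, mul_sum]
  refine sum_congr rfl fun j _ => ?_
  change U _ = _
  rw [U_ofPowerSeries_expand_mul hm hU, map_mul, hT, hcoe, mul_assoc]

theorem exists_ofPowerSeries_eq_of_mul_eq {f g : R⟦X⟧} (hg : IsUnit g) {T : LaurentSeries R}
    (hT : T * HahnSeries.ofPowerSeries ℤ R g = HahnSeries.ofPowerSeries ℤ R f) :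
    ∃ t, HahnSeries.ofPowerSeries ℤ R t = T ∧ t * g = f := by
  obtain ⟨t, rfl⟩ := hg.dvd (a := f)
  rw [mul_comm g, map_mul] at hT
  exact ⟨t, ((hg.map (HahnSeries.ofPowerSeries ℤ R)).mul_right_cancel hT).symm, mul_comm t g⟩

end UOperator

section ShiftFiltration

variable {R : Type*} [CommRing R] {T : Rˣ} {d : ℕ}

/-- A decreasing filtration of `R` by `ℤ`-submodules whose index is raised by exactly `d` under
multiplication by the unit `T`. -/
structure IsShiftFiltration (T : Rˣ) (d : ℕ) (M : ℤ → Submodule ℤ R) : Prop where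
  antitone : Antitone M
  map_mulLeft (k : ℤ) : (M k).map (LinearMap.mulLeft ℤ (T : R)) = M (k + d)

namespace IsShiftFiltration

variable {M N : ℤ → Submodule ℤ R}

theorem sup (hM : IsShiftFiltration T d M) (hN : IsShiftFiltration T d N) :
    IsShiftFiltration T d (M ⊔ N) where
  antitone := hM.antitone.sup hN.antitone
  map_mulLeft k := by
    rw [Pi.sup_apply, Submodule.map_sup, hM.map_mulLeft, hN.map_mulLeft, Pi.sup_apply]

theorem unit_mul_mem_iff (hM : IsShiftFiltration T d M) {k : ℤ} {x : R} :
    T * x ∈ M (k + d) ↔ x ∈ M k := by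
  rw [← hM.map_mulLeft]
  exact T.isUnit.mul_right_injective.mem_set_image

theorem eval₂_mul_mem (hM : IsShiftFiltration T d M) (p : ℤ[X]) {k : ℤ} {x : R} (hx : x ∈ M k) :
    p.eval₂ (Int.castRingHom R) T * x ∈ M k := by
  have hpow (n : ℕ) : (T : R) ^ n * x ∈ M k := by
    induction n with
    | zero => simpa using hx
    | succ n ih =>
      rw [pow_succ', mul_assoc]
      exact hM.antitone (by lia) (hM.unit_mul_mem_iff.2 ih)
  induction p using Polynomial.induction_on' with
  | add p q hp hq =>
    rw [Polynomial.eval₂_add, add_mul]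
    exact add_mem hp hq
  | monomial n c =>
    rw [Polynomial.eval₂_monomial, eq_intCast, mul_assoc, ← zsmul_eq_mul]
    exact zsmul_mem (hpow n) c

variable {B : ℕ → ℤ[X]} {V : ℤ → R}

theorem sum_eval₂_mul_mem (hM : IsShiftFiltration T d M) {m : ℕ} {k : ℤ}
    (hV : ∀ j < m, V (k + j) ∈ M (k + j)) :
    ∑ j ∈ range m, (B j).eval₂ (Int.castRingHom R) T * V (k + j) ∈ M k :=
  sum_mem fun j hj => hM.eval₂_mul_mem _ (hM.antitone (by lia) (hV j (mem_range.1 hj)))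

theorem mem_add_of_window (hM : IsShiftFiltration T d M)
    (hrec : ∀ k, V (k + d) = T * ∑ j ∈ range d, (B j).eval₂ (Int.castRingHom R) T * V (k + j))
    {k : ℤ} (hV : ∀ j < d, V (k + j) ∈ M (k + j)) : V (k + d) ∈ M (k + d) := by
  rw [hrec, hM.unit_mul_mem_iff]
  exact hM.sum_eval₂_mul_mem hV

theorem mem_of_window_succ (hM : IsShiftFiltration T d M) (hd : d ≠ 0) (hB : B 0 = 1)
    (hrec : ∀ k, V (k + d) = T * ∑ j ∈ range d, (B j).eval₂ (Int.castRingHom R) T * V (k + j))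
    {k : ℤ} (hV : ∀ j < d, V (k + 1 + j) ∈ M (k + 1 + j)) : V k ∈ M k := by
  obtain ⟨e, rfl⟩ := Nat.exists_eq_succ_of_ne_zero hd
  have hsum : ∑ j ∈ range e, (B (j + 1)).eval₂ (Int.castRingHom R) T * V (k + 1 + j) ∈ M (k + 1) :=
    hM.sum_eval₂_mul_mem (B := fun j => B (j + 1)) fun j hj => hV j (by lia)
  have htop : V (k + (e + 1 : ℕ)) ∈ M (k + (e + 1 : ℕ)) := by
    convert hV e (by lia) using 2 <;> lia
  rw [hrec, hM.unit_mul_mem_iff, sum_range_succ', hB] at htop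
  simpa [add_right_comm, add_assoc] using
    sub_mem htop (hM.antitone (by lia : k ≤ k + 1) hsum)

theorem mem_of_recurrence (hM : IsShiftFiltration T d M) (hd : d ≠ 0) (hB : B 0 = 1)
    (hrec : ∀ k, V (k + d) = T * ∑ j ∈ range d, (B j).eval₂ (Int.castRingHom R) T * V (k + j))
    {l : ℤ} (hl : ∀ k, l ≤ k → k < l + d → V k ∈ M k) (k : ℤ) : V k ∈ M k := by
  have hwindow (i : ℤ) : ∀ j < d, V (l + i + j) ∈ M (l + i + j) := by
    induction i with
    | zero => exact fun j hj => hl _ (by lia) (by lia)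
    | succ i ih =>
      intro j hj
      rw [show l + (i + 1) + j = l + i + (j + 1 : ℕ) by push_cast; ring]
      obtain hlt | rfl : j + 1 < d ∨ j + 1 = d := by lia
      · exact ih _ hlt
      · exact hM.mem_add_of_window hrec ih
    | pred i ih =>
      intro j hj
      cases j with
      | zero =>
        rw [Nat.cast_zero, add_zero]
        refine hM.mem_of_window_succ hd hB hrec ?_
        rwa [show l + (-i - 1) + 1 = l + -i by ring]
      | succ j =>
        rw [show l + (-i - 1) + (j + 1 : ℕ) = l + -i + j by push_cast; ring]
        exact ih j (by lia)
  simpa using hwindow (k - l) 0 (by lia)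

end IsShiftFiltration

end ShiftFiltration

section OrderLattice

variable {R : Type*} [CommRing R]

/-- The `ℤ`-span of the products `v * T ^ n` with `n ≥ ⌈(k + s) / d⌉`: the values `v * p(T)` at
Laurent polynomials `p` satisfying the order bound. The ceiling is encoded as `k + s ≤ d * n`. -/
def orderLattice (T : Rˣ) (d : ℕ) (v : R) (s k : ℤ) : Submodule ℤ R :=
  Submodule.span ℤ ((fun n : ℤ => v * ↑(T ^ n)) '' {n | k + s ≤ d * n})

theorem isShiftFiltration_orderLattice (T : Rˣ) (d : ℕ) (v : R) (s : ℤ) :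
    IsShiftFiltration T d (orderLattice T d v s) where
  antitone k k' hk := Submodule.span_mono (Set.image_mono fun n hn => by
    exact (add_le_add_left hk s).trans hn)
  map_mulLeft k := by
    have hset : {n : ℤ | k + d + s ≤ d * n} = (· + 1) '' {n : ℤ | k + s ≤ d * n} := by
      ext n
      simp only [Set.image_add_right, Set.mem_preimage, Set.mem_ofPred_eq]
      constructor <;> intro hn <;> linarith
    rw [orderLattice, orderLattice, Submodule.map_span, hset, Set.image_image, Set.image_image]
    simp only [LinearMap.mulLeft_apply, zpow_add_one, Units.val_mul, mul_left_comm, mul_comm]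

theorem mem_orderLattice_iff {T : (LaurentSeries ℤ)ˣ} {d : ℕ} (hd : d ≠ 0) {v x : LaurentSeries ℤ}
    {s k : ℤ} : x ∈ orderLattice T d v s k ↔
      ∃ p : ℤ →₀ ℤ, v * evalT T p = x ∧ ∀ n ∈ p.support, ⌈((k + s : ℤ) : ℚ) / d⌉ ≤ n := by
  have hceil (n : ℤ) : ⌈((k + s : ℤ) : ℚ) / d⌉ ≤ n ↔ k + s ≤ d * n := by
    rw [Int.ceil_le, div_le_iff₀' (by positivity)]
    norm_cast
  rw [orderLattice, Finsupp.mem_span_image_iff_linearCombination]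
  simp only [hceil, Finsupp.mem_supported]
  refine exists_congr fun p => ?_
  have : Finsupp.linearCombination ℤ (fun n : ℤ => v * ↑(T ^ n)) p = v * evalT T p := by
    rw [Finsupp.linearCombination_apply, evalT, Finsupp.mul_sum]
    simp only [mul_smul_comm]
  rw [this, and_comm]
  rfl

theorem mem_orderLattice_sup_sup_iff {T : (LaurentSeries ℤ)ˣ} {d : ℕ} (hd : d ≠ 0)
    {v₁ v₂ v₃ x : LaurentSeries ℤ} {s₁ s₂ s₃ k : ℤ} :
    x ∈ (orderLattice T d v₁ s₁ ⊔ orderLattice T d v₂ s₂ ⊔ orderLattice T d v₃ s₃) k ↔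
      ∃ p₁ p₂ p₃ : ℤ →₀ ℤ, x = v₁ * evalT T p₁ + v₂ * evalT T p₂ + v₃ * evalT T p₃ ∧
        (∀ n ∈ p₁.support, ⌈((k + s₁ : ℤ) : ℚ) / d⌉ ≤ n) ∧
        (∀ n ∈ p₂.support, ⌈((k + s₂ : ℤ) : ℚ) / d⌉ ≤ n) ∧
        (∀ n ∈ p₃.support, ⌈((k + s₃ : ℤ) : ℚ) / d⌉ ≤ n) := by
  simp only [Pi.sup_apply, Submodule.mem_sup, mem_orderLattice_iff hd]
  constructor
  · rintro ⟨-, ⟨-, ⟨p₁, rfl, h₁⟩, -, ⟨p₂, rfl, h₂⟩, rfl⟩, -, ⟨p₃, rfl, h₃⟩, rfl⟩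
    exact ⟨p₁, p₂, p₃, rfl, h₁, h₂, h₃⟩
  · rintro ⟨p₁, p₂, p₃, rfl, h₁, h₂, h₃⟩
    exact ⟨_, ⟨_, ⟨p₁, rfl, h₁⟩, _, ⟨p₂, rfl, h₂⟩, rfl⟩, _, ⟨p₃, rfl, h₃⟩, rfl⟩

end OrderLattice

theorem U_seven_mul_zpow_add_seven {T : (LaurentSeries ℤ)ˣ}
    (hT : (T : LaurentSeries ℤ) * HahnSeries.ofPowerSeries ℤ ℤ (J 1 ^ 4) =
      HahnSeries.ofPowerSeries ℤ ℤ (X * J 7 ^ 4))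
    {U : LaurentSeries ℤ → LaurentSeries ℤ}
    (hU : ∀ (f : LaurentSeries ℤ) (n : ℤ), (U f).coeff n = f.coeff (7 * n))
    (u : LaurentSeries ℤ) (k : ℤ) :
    U (u * ↑(T ^ (k + (7 : ℕ)))) = T * ∑ j ∈ range 7,
      (modularCoeff j).eval₂ (Int.castRingHom (LaurentSeries ℤ)) T * U (u * ↑(T ^ (k + j))) := by
  obtain ⟨t, htT, ht⟩ := exists_ofPowerSeries_eq_of_mul_eq ((isUnit_J one_ne_zero).pow 4) hT
  exact U_mul_zpow_add (by norm_num) hU (modular_equation ht) htT u k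

/-- Lemma on orders: if for `l ≤ k ≤ l+6` there are Laurent polynomials
`p_k^{(i)} ∈ ℤ[x,x⁻¹]` with `U_7(u·t^k) = v₁·p_k^{(1)}(t) + v₂·p_k^{(2)}(t) + v₃·p_k^{(3)}(t)`
and lowest exponent of `p_k^{(i)}` at least `⌈(k+s_i)/7⌉`, then such Laurent polynomials
exist for every `k : ℤ`. Here `t = q·J_7^4/J_1^4` and `U_7` is the coefficient-extraction
operator `∑ f(n) qⁿ ↦ ∑ f(7n) qⁿ`. -/
theorem stmt6
    (T : (LaurentSeries ℤ)ˣ)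
    (hT : (T : LaurentSeries ℤ) * HahnSeries.ofPowerSeries ℤ ℤ ((J 1) ^ 4)
        = HahnSeries.ofPowerSeries ℤ ℤ (PowerSeries.X * (J 7) ^ 4))
    (U : LaurentSeries ℤ → LaurentSeries ℤ)
    (hU : ∀ (f : LaurentSeries ℤ) (n : ℤ), (U f).coeff n = f.coeff (7 * n))
    (u v₁ v₂ v₃ : LaurentSeries ℤ) (l s₁ s₂ s₃ : ℤ)
    (h : ∀ k : ℤ, l ≤ k → k ≤ l + 6 →
      ∃ p₁ p₂ p₃ : ℤ →₀ ℤ,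
        U (u * ↑(T ^ k)) = v₁ * evalT T p₁ + v₂ * evalT T p₂ + v₃ * evalT T p₃ ∧
        (∀ n ∈ p₁.support, ⌈((k + s₁ : ℤ) : ℚ) / 7⌉ ≤ n) ∧
        (∀ n ∈ p₂.support, ⌈((k + s₂ : ℤ) : ℚ) / 7⌉ ≤ n) ∧
        (∀ n ∈ p₃.support, ⌈((k + s₃ : ℤ) : ℚ) / 7⌉ ≤ n)) :
    ∀ k : ℤ,
      ∃ p₁ p₂ p₃ : ℤ →₀ ℤ,
        U (u * ↑(T ^ k)) = v₁ * evalT T p₁ + v₂ * evalT T p₂ + v₃ * evalT T p₃ ∧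
        (∀ n ∈ p₁.support, ⌈((k + s₁ : ℤ) : ℚ) / 7⌉ ≤ n) ∧
        (∀ n ∈ p₂.support, ⌈((k + s₂ : ℤ) : ℚ) / 7⌉ ≤ n) ∧
        (∀ n ∈ p₃.support, ⌈((k + s₃ : ℤ) : ℚ) / 7⌉ ≤ n) := by
  have hfiltration : IsShiftFiltration T 7
      (orderLattice T 7 v₁ s₁ ⊔ orderLattice T 7 v₂ s₂ ⊔ orderLattice T 7 v₃ s₃) :=
    ((isShiftFiltration_orderLattice ..).sup (isShiftFiltration_orderLattice ..)).sup
      (isShiftFiltration_orderLattice ..)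
  let V (k : ℤ) : LaurentSeries ℤ := U (u * ↑(T ^ k))
  have hwindow (k : ℤ) (hlk : l ≤ k) (hkl : k < l + (7 : ℕ)) : V k ∈
      (orderLattice T 7 v₁ s₁ ⊔ orderLattice T 7 v₂ s₂ ⊔ orderLattice T 7 v₃ s₃) k :=
    (mem_orderLattice_sup_sup_iff (by norm_num)).2 (h k hlk (by lia))
  have hmem := hfiltration.mem_of_recurrence (V := V) (by norm_num) (by rw [modularCoeff])
    (U_seven_mul_zpow_add_seven hT hU u) hwindow
  exact fun k => (mem_orderLattice_sup_sup_iff (by norm_num)).1 (hmem k)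
end
end

section
/- For every integer α ≥ 1, the Laurent series L_{2α} (in the d_3 tower) satisfies L_{2α} = q · (J_1^{10}/J_2^3) · ∑_{n≥0} d_3(7^{2α}·n + λ_{2α})·q^n, where λ_β = (5·7^β + 1)/6. -/
noncomputable section

/-!
Write `F = ∑ d₃(n) qⁿ = J₂³ / J₁¹⁰`. Then `A₃ = q⁸ F(q) / F(q⁴⁹)`, and a factor `g(q^m)` can be
pulled out of `U_m` as `g(q)`. With `U_49 = U_7 ∘ U_7` this gives
`U_49 (A₃ L) · F = U_49 (A₃ L · F(q⁴⁹)) = U_49 (q⁸ · L F)`,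
so the coefficient of `qⁿ` in `L_{2α+2} F` is the coefficient of `q^(49 n - 8)` in `L_{2α} F`.
Iterating from `L₀ F = F`, the coefficient of `qⁿ` in `L_{2α} F` is the coefficient of `F` at
`49^α n - 8 (1 + 49 + ⋯ + 49^(α-1)) = 49^α (n - 1) + λ_{2α}`.
-/

section UOperator

open PowerSeries
open scoped LaurentSeries

variable {R : Type*} [CommRing R] {m : ℕ} {U : R⸨X⸩ → R⸨X⸩}

/-- `U` is the operator `U_m` on Laurent series, `∑ f(n) qⁿ ↦ ∑ f(mn) qⁿ`. It is a predicate so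
that it applies to an operator known only through the coefficients of its values. -/
def IsUOperator (m : ℕ) (U : R⸨X⸩ → R⸨X⸩) : Prop :=
  ∀ (f : R⸨X⸩) (n : ℤ), (U f).coeff n = f.coeff (m * n)

theorem IsUOperator.comp {k : ℕ} {V : R⸨X⸩ → R⸨X⸩} (hU : IsUOperator m U)
    (hV : IsUOperator k V) : IsUOperator (m * k) (U ∘ V) := fun f n => by
  rw [Function.comp_apply, hU, hV, Nat.cast_mul, mul_assoc, mul_left_comm]

theorem coeff_coe_expand_mul (hm : m ≠ 0) (g : R⟦X⟧) (n : ℤ) :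
    (expand m hm g : R⸨X⸩).coeff (m * n) = (g : R⸨X⸩).coeff n := by
  have neg_iff : (m : ℤ) * n < 0 ↔ n < 0 := by
    simp [mul_neg_iff, Nat.pos_of_ne_zero hm]
  rw [coeff_coe, coeff_coe, Int.natAbs_mul, Int.natAbs_natCast, coeff_expand_mul]
  simp only [neg_iff]

theorem coeff_coe_expand_of_not_dvd (hm : m ≠ 0) (g : R⟦X⟧) {n : ℤ} (h : ¬(m : ℤ) ∣ n) :
    (expand m hm g : R⸨X⸩).coeff n = 0 := by
  rw [coeff_coe, coeff_expand_of_not_dvd _ _ _ (mt Int.natCast_dvd.2 h), ite_self]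

theorem IsUOperator.map_mul_coe_expand (hU : IsUOperator m U) (hm : m ≠ 0) (f : R⸨X⸩)
    (g : R⟦X⟧) : U (f * (expand m hm g : R⸨X⸩)) = U f * (g : R⸨X⸩) := by
  ext n
  rw [hU, HahnSeries.coeff_mul, HahnSeries.coeff_mul]
  symm
  refine Finset.sum_of_injOn (fun ij => (m * ij.1, m * ij.2)) ?_ ?_ ?_ ?_
  · rintro ⟨i, j⟩ - ⟨i', j'⟩ - h
    simpa [hm] using h
  · rintro ⟨i, j⟩ h
    simp only [Finset.mem_coe, Finset.mem_antidiagonal, HahnSeries.mem_support] at h ⊢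
    rw [coeff_coe_expand_mul, ← hU, ← h.2.2, mul_add]
    exact ⟨h.1, h.2.1, rfl⟩
  · rintro ⟨i, j⟩ h h_notMem
    have not_dvd : ¬(m : ℤ) ∣ j := by
      rintro ⟨j', rfl⟩
      simp only [Finset.mem_antidiagonal, HahnSeries.mem_support, coeff_coe_expand_mul] at h
      obtain rfl : i = m * (n - j') := by linear_combination h.2.2
      refine h_notMem ⟨(n - j', j'), ?_, rfl⟩
      rw [Finset.mem_coe, Finset.mem_antidiagonal, HahnSeries.mem_support, hU]
      exact ⟨h.1, h.2.1, sub_add_cancel n j'⟩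
    rw [coeff_coe_expand_of_not_dvd hm g not_dvd, mul_zero]
  · rintro ⟨i, j⟩ -
    rw [hU, coeff_coe_expand_mul]

theorem IsUOperator.coeff_tower_mul (hU : IsUOperator m U) (hm : m ≠ 0) {s : ℕ} {F : R⟦X⟧}
    {A : R⸨X⸩} (hA : A * (expand m hm F : R⸨X⸩) = ((X ^ s * F : R⟦X⟧) : R⸨X⸩))
    {L : ℕ → R⸨X⸩} (hL_zero : L 0 = 1) (hL_succ : ∀ i, L (i + 1) = U (A * L i)) (i : ℕ) (n : ℤ) :
    (L i * (F : R⸨X⸩)).coeff n =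
      (F : R⸨X⸩).coeff (m ^ i * n - s * ∑ j ∈ Finset.range i, (m : ℤ) ^ j) := by
  induction i generalizing n with
  | zero => simp [hL_zero]
  | succ i ih =>
    calc (L (i + 1) * (F : R⸨X⸩)).coeff n
        = (U (A * L i * (expand m hm F : R⸨X⸩))).coeff n := by
          rw [hL_succ, hU.map_mul_coe_expand]
      _ = (HahnSeries.single (s : ℤ) 1 * (L i * (F : R⸨X⸩))).coeff (m * n) := by
          rw [hU, mul_right_comm, hA, coe_mul, HahnSeries.ofPowerSeries_X_pow, mul_right_comm,
            mul_assoc]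
      _ = (F : R⸨X⸩).coeff (m ^ i * (m * n - s) - s * ∑ j ∈ Finset.range i, (m : ℤ) ^ j) := by
          rw [HahnSeries.coeff_single_mul, one_mul, ih]
      _ = _ := by
          rw [Finset.sum_range_succ]
          ring_nf

theorem eq_coe_X_mul_mk_of_coeff_eq {N e r : ℕ} (he : 0 < e) (hr : r + e = N) {f : R⸨X⸩}
    {F : R⟦X⟧} (hf : ∀ n : ℤ, f.coeff n = (F : R⸨X⸩).coeff (N * n - e)) :
    f = ((X * mk fun n => coeff (N * n + r) F : R⟦X⟧) : R⸨X⸩) := by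
  ext n
  rw [hf, coe_mul, coe_X, HahnSeries.coeff_single_mul, one_mul]
  rcases lt_or_ge (n - 1) 0 with hn | hn
  · rw [coeff_coe, coeff_coe, if_pos hn, if_pos (by nlinarith)]
  · lift n - 1 to ℕ using hn with k hk
    have index_eq : (N * n - e : ℤ) = (N * k + r : ℕ) := by
      subst hr
      push_cast
      linear_combination (-(r + e : ℤ)) * hk
    rw [index_eq, LaurentSeries.coeff_coe_powerSeries, LaurentSeries.coeff_coe_powerSeries,
      coeff_mk]

end UOperator

section EulerProduct

open PowerSeries
open scoped LaurentSeries

theorem coeff_prod_range_eq_coeff_J {b : ℕ} (hb : b ≠ 0) {n N : ℕ} (h : n < N) :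
    coeff n (∏ k ∈ Finset.range N, (1 - (X : ℤ⟦X⟧) ^ (b * (k + 1)))) = coeff n (J b) := by
  induction N, h using Nat.le_induction with
  | base => rw [J, coeff_mk]
  | succ N hN ih =>
    have hlt : n < b * (N + 1) := by nlinarith [Nat.pos_of_ne_zero hb]
    rw [Finset.prod_range_succ, mul_sub, mul_one, map_sub, ih, coeff_mul_X_pow',
      if_neg hlt.not_ge, sub_zero]

theorem J_mul_eq_expand {m b : ℕ} (hm : m ≠ 0) (hb : b ≠ 0) : J (m * b) = expand m hm (J b) := by
  have coeff_J_mul (n : ℕ) : coeff n (J (m * b)) = coeff n (expand m hm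
      (∏ k ∈ Finset.range (n + 1), (1 - (X : ℤ⟦X⟧) ^ (b * (k + 1))))) := by
    simp only [J, coeff_mk, map_prod, map_sub, map_one, map_pow, expand_X, ← pow_mul, mul_assoc]
  ext n
  rw [coeff_J_mul]
  by_cases h : m ∣ n
  · obtain ⟨d, rfl⟩ := h
    have hd : d < m * d + 1 := Nat.lt_succ_of_le (Nat.le_mul_of_pos_left d (Nat.pos_of_ne_zero hm))
    rw [coeff_expand_mul, coeff_expand_mul, coeff_prod_range_eq_coeff_J hb hd]
  · rw [coeff_expand_of_not_dvd _ _ _ h, coeff_expand_of_not_dvd _ _ _ h]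

theorem J_ne_zero {b : ℕ} (hb : b ≠ 0) : J b ≠ 0 := by
  have coeff_zero_J : coeff 0 (J b) = 1 := by simp [J, hb]
  intro h
  simp [h] at coeff_zero_J

theorem mul_coe_expand_eq_of_eta_quotient {m a b x y s : ℕ} (hm : m ≠ 0) (ha : a ≠ 0)
    (hb : b ≠ 0) {F : ℤ⟦X⟧} (hF : F * J a ^ x = J b ^ y) {A : ℤ⸨X⸩}
    (hA : A * ((J a ^ x * J (m * b) ^ y : ℤ⟦X⟧) : ℤ⸨X⸩) =
      ((X ^ s * J b ^ y * J (m * a) ^ x : ℤ⟦X⟧) : ℤ⸨X⸩)) :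
    A * (expand m hm F : ℤ⸨X⸩) = ((X ^ s * F : ℤ⟦X⟧) : ℤ⸨X⸩) := by
  have expand_hF : expand m hm F * J (m * a) ^ x = J (m * b) ^ y := by
    rw [J_mul_eq_expand hm ha, J_mul_eq_expand hm hb, ← map_pow, ← map_pow, ← map_mul, hF]
  have denom_ne_zero : ((J a ^ x * J (m * a) ^ x : ℤ⟦X⟧) : ℤ⸨X⸩) ≠ 0 :=
    (map_ne_zero_iff _ HahnSeries.ofPowerSeries_injective).2 <|
      mul_ne_zero (pow_ne_zero _ (J_ne_zero ha)) (pow_ne_zero _ (J_ne_zero (mul_ne_zero hm ha)))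
  refine mul_right_cancel₀ denom_ne_zero ?_
  rw [← expand_hF, ← hF] at hA
  simp only [coe_mul] at hA ⊢
  linear_combination hA

end EulerProduct

theorem lambda_add_eight_mul_geom_sum (α : ℕ) :
    (5 * 7 ^ (2 * α) + 1) / 6 + 8 * ∑ j ∈ Finset.range α, 49 ^ j = 7 ^ (2 * α) := by
  have geom_sum : (∑ j ∈ Finset.range α, 49 ^ j) * 48 + 1 = 49 ^ α := geom_sum_mul_add 48 α
  rw [pow_mul]
  norm_num only
  lia

/-- in the d₃ tower (`A₃ = q^8·J_2^3·J_49^{10}/(J_1^{10}·J_98^3)`, `L_0 = 1`,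
`L_{2β+1} = U_7(A₃·L_{2β})`, `L_{2β+2} = U_7(L_{2β+1})`), for every `α ≥ 1`:
`L_{2α} = q·(J_1^{10}/J_2^3)·∑_{n≥0} d_3(7^{2α}·n + λ_{2α})·qⁿ`, with `λ_β = (5·7^β+1)/6`;
stated multiplied through by the invertible series `J_2^3`. -/
theorem stmt10
    (d3 : ℕ → ℤ) (hd : PowerSeries.mk d3 * (J 1) ^ 10 = (J 2) ^ 3)
    (U : LaurentSeries ℤ → LaurentSeries ℤ)
    (hU : ∀ (f : LaurentSeries ℤ) (n : ℤ), (U f).coeff n = f.coeff (7 * n))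
    (A3 : LaurentSeries ℤ)
    (hA3 : A3 * HahnSeries.ofPowerSeries ℤ ℤ ((J 1) ^ 10 * (J 98) ^ 3)
        = HahnSeries.ofPowerSeries ℤ ℤ (PowerSeries.X ^ 8 * (J 2) ^ 3 * (J 49) ^ 10))
    (L : ℕ → LaurentSeries ℤ) (hL0 : L 0 = 1)
    (hLodd : ∀ β : ℕ, L (2 * β + 1) = U (A3 * L (2 * β)))
    (hLeven : ∀ β : ℕ, L (2 * β + 2) = U (L (2 * β + 1)))
    (α : ℕ) (hα : 1 ≤ α) :
    L (2 * α) * HahnSeries.ofPowerSeries ℤ ℤ ((J 2) ^ 3)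
      = HahnSeries.ofPowerSeries ℤ ℤ
          (PowerSeries.X * (J 1) ^ 10 *
            PowerSeries.mk fun n =>
              d3 (7 ^ (2 * α) * n + (5 * 7 ^ (2 * α) + 1) / 6)) := by
  have hA : A3 * HahnSeries.ofPowerSeries ℤ ℤ (PowerSeries.expand 49 (by norm_num) (.mk d3)) =
      HahnSeries.ofPowerSeries ℤ ℤ (PowerSeries.X ^ 8 * .mk d3) :=
    mul_coe_expand_eq_of_eta_quotient (by norm_num) one_ne_zero two_ne_zero hd hA3
  have hUU : IsUOperator (7 * 7) (U ∘ U) := IsUOperator.comp hU hU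
  have coeff_eq := hUU.coeff_tower_mul (by norm_num) hA (L := fun i => L (2 * i)) hL0
    (fun i => (hLeven i).trans (congrArg U (hLodd i))) α
  have shift_pos : 0 < 8 * ∑ j ∈ Finset.range α, 49 ^ j := by
    have : (Finset.range α).Nonempty := Finset.nonempty_range_iff.2 (by lia)
    positivity
  have tower_mul_genFun := eq_coe_X_mul_mk_of_coeff_eq shift_pos (lambda_add_eight_mul_geom_sum α)
    (f := L (2 * α) * HahnSeries.ofPowerSeries ℤ ℤ (.mk d3)) (F := .mk d3)
    (fun n => by rw [coeff_eq, pow_mul]; push_cast; norm_num)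
  rw [← hd, map_mul, ← mul_assoc, tower_mul_genFun, ← map_mul, mul_right_comm]
  simp only [PowerSeries.coeff_mk]
end
end
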